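/- arXiv:2108.00711 — 2 statements merged into one kernel-verified Lean document; each statement's English description precedes it below -/
import Mathlib

section
/- Let N ≥ 1. Suppose f : ℝ → ℝ is continuous and satisfies the growth condition |f(u)| ≤ a(|u| + |u|^{q−1}) for some a > 0 and q > 2, together with: (i) f(u) = o(u) as u → 0; (ii) u ↦ f(u)/|u| is strictly increasing on (−∞,0) and on (0,∞); (iii) F(u)/u² → ∞ as |u| → ∞, where F(u) = ∫₀ᵘ f(s) ds. Suppose V : ℤ^N → ℝ is a bounded potential well: 0 < V₀ ≤ inf_{ℤ^N} V ≤ sup_{ℤ^N} V = V_∞ < ∞ and V(x) → V_∞ as |x| → ∞. Then the equation −Δu + V(x)u = f(u) has a ground state solution in H¹(ℤ^N): there exists a nonzero u ∈ H¹(ℤ^N) with Φ'(u) = 0 and Φ(u) = inf{Φ(v) : v ∈ H¹(ℤ^N)\{0}, Φ'(v)v = 0}. -/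
open scoped ENNReal

noncomputable section

/-- `H¹(V)`: as a set, the ℓ²-summable real functions on the vertex set;
the `H¹` norm is equivalent to the ℓ² norm by the uniform degree bound. -/
abbrev H1 (Vtx : Type*) := lp (fun _ : Vtx => ℝ) 2

variable {Vtx : Type*}

/-- `Γ(u,v)(x) = (1/2) Σ_{y∼x} (u(y)-u(x))(v(y)-v(x))`. -/
def gammaProd (adj : Vtx → Vtx → Prop) (u v : Vtx → ℝ) (x : Vtx) : ℝ :=
  (1/2) * ∑' y : {y : Vtx // adj x y}, (u y.1 - u x) * (v y.1 - v x)

/-- `|∇u|²(x) = (1/2) Σ_{y∼x} (u(y)-u(x))²`. -/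
def gradSq (adj : Vtx → Vtx → Prop) (u : Vtx → ℝ) (x : Vtx) : ℝ :=
  gammaProd adj u u x

/-- `Δu(x) = Σ_{y∼x} (u(y)-u(x))`. -/
def graphLap (adj : Vtx → Vtx → Prop) (u : Vtx → ℝ) (x : Vtx) : ℝ :=
  ∑' y : {y : Vtx // adj x y}, (u y.1 - u x)

/-- the norm `‖u‖` induced by the potential `V`:
`‖u‖² = Σ_x (|∇u|²(x) + V(x)u(x)²)`. -/
def nrmV (adj : Vtx → Vtx → Prop) (Vp : Vtx → ℝ) (u : Vtx → ℝ) : ℝ :=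
  Real.sqrt (∑' x, (gradSq adj u x + Vp x * (u x)^2))

/-- the `V`-norm of an element of `H¹`. -/
def nrmH (adj : Vtx → Vtx → Prop) (Vp : Vtx → ℝ) (u : H1 Vtx) : ℝ :=
  nrmV adj Vp (fun y => u y)

/-- `⟨u,v⟩ = Σ_x (Γ(u,v)(x) + V(x)u(x)v(x))`. -/
def iprodH (adj : Vtx → Vtx → Prop) (Vp : Vtx → ℝ) (u v : H1 Vtx) : ℝ :=
  ∑' x, (gammaProd adj (fun y => u y) (fun y => v y) x + Vp x * u x * v x)

/-- the variational functional `Φ(u) = ½‖u‖² − Σ_x F(x,u(x))`. -/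
def PhiF (adj : Vtx → Vtx → Prop) (Vp : Vtx → ℝ) (F : Vtx → ℝ → ℝ) (u : H1 Vtx) : ℝ :=
  (1/2) * ∑' x, (gradSq adj (fun y => u y) x + Vp x * (u x)^2) - ∑' x, F x (u x)

/-- the Nehari manifold `N = {u ∈ H¹\{0} : Φ'(u)u = 0}`. -/
def Nehari (adj : Vtx → Vtx → Prop) (Vp : Vtx → ℝ) (F : Vtx → ℝ → ℝ) : Set (H1 Vtx) :=
  {u | u ≠ 0 ∧ fderiv ℝ (PhiF adj Vp F) u u = 0}

/-- adjacency of the lattice graph `ℤ^N`. -/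
def adjZ (N : ℕ) (x y : Fin N → ℤ) : Prop := (∑ i, (x i - y i).natAbs) = 1

end

/-!
On the Nehari manifold `{u ≠ 0 | Φ'(u)u = 0}` the energy `Φ` equals `∑ (f(u)u/2 - F(u))`. Each
summand decreases along rays towards `0`, because `f(t)/|t|` is monotone, so any `u ≠ 0` with
`Φ'(u)u ≤ 0` scales down onto the manifold without increasing this sum. A minimizing sequence is
bounded, and its sup norms are bounded below, so after translating peaks to a fixed vertex it has a
nonzero pointwise limit `v`. If the peaks escape to infinity, the potential seen by `v` is the
constant `V_∞ ≥ V`, which only helps to obtain `Φ'(v)v ≤ 0`; projecting `v` gives a minimizer.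
Minimizers are critical points of `Φ` because the manifold is crossed transversally, in the
topological sense of a sign change, by every ray through one of its points.
-/

open Filter Set Topology

/-- The class of nonlinearities `f` for which the Nehari method below works; `F` is the primitive of
`f` vanishing at `0`. -/
structure NehariNonlinearity (f F : ℝ → ℝ) : Prop where
  continuous : Continuous f
  small : ∀ ε > 0, ∃ δ > 0, ∀ t : ℝ, t ≠ 0 → |t| < δ → |f t| ≤ ε * |t|
  strictMonoOn_neg : StrictMonoOn (fun t => f t / |t|) (Iio 0)
  strictMonoOn_pos : StrictMonoOn (fun t => f t / |t|) (Ioi 0)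
  primitive : ∀ t, F t = ∫ s in (0 : ℝ)..t, f s
  superquadratic : ∀ M : ℝ, ∃ R > 0, ∀ t : ℝ, R ≤ |t| → M ≤ F t / t ^ 2

/-- The density `f(t)t/2 - F(t)` of `Φ(u) - Φ'(u)u/2`, which does not see the quadratic part of the
energy. -/
noncomputable def quadraticGap (f F : ℝ → ℝ) (t : ℝ) : ℝ := f t * t / 2 - F t

namespace NehariNonlinearity

variable {f F : ℝ → ℝ} (h : NehariNonlinearity f F) {s t : ℝ}
include h

theorem tendsto_div_self : Tendsto (fun t => f t / t) (𝓝 0) (𝓝 0) := by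
  rw [Metric.tendsto_nhds_nhds]
  intro ε hε
  obtain ⟨δ, hδ, hf⟩ := h.small (ε / 2) (half_pos hε)
  refine ⟨δ, hδ, fun t ht => ?_⟩
  rw [Real.dist_0_eq_abs] at ht ⊢
  rcases eq_or_ne t 0 with rfl | ht0
  · simpa using hε
  · rw [abs_div, div_lt_iff₀ (abs_pos.2 ht0)]
    exact (hf t ht0 ht).trans_lt (by gcongr; exact half_lt_self hε)

theorem continuous_div_self : Continuous fun t => f t / t := by
  refine continuous_iff_continuousAt.2 fun t => ?_
  rcases eq_or_ne t 0 with rfl | ht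
  · simpa [ContinuousAt] using h.tendsto_div_self
  · exact h.continuous.continuousAt.div continuousAt_id ht

theorem apply_zero : f 0 = 0 := by
  have hf : Tendsto f (𝓝[≠] 0) (𝓝 0) := by
    refine Tendsto.congr' (f₁ := fun t => f t / t * t) ?_ ?_
    · filter_upwards [self_mem_nhdsWithin] with t ht using div_mul_cancel₀ _ ht
    · simpa using (h.tendsto_div_self.mul tendsto_id).mono_left (nhdsWithin_le_nhds (s := {0}ᶜ))
  exact tendsto_nhds_unique (h.continuous.tendsto' 0 _ rfl |>.mono_left nhdsWithin_le_nhds) hf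

theorem div_self_mul_self (t : ℝ) : f t / t * t = f t :=
  div_mul_cancel_of_imp fun ht => ht ▸ h.apply_zero

theorem div_self_mul_lt_of_pos (hs : 0 < s) (hs1 : s < 1) (ht : t ≠ 0) :
    f (s * t) / (s * t) < f t / t := by
  rcases ht.lt_or_gt with ht | ht
  · have hst : s * t < 0 := mul_neg_of_pos_of_neg hs ht
    have := h.strictMonoOn_neg ht hst (by nlinarith)
    simpa only [abs_of_neg ht, abs_of_neg hst, div_neg, neg_lt_neg_iff] using this
  · have hst : 0 < s * t := mul_pos hs ht
    have := h.strictMonoOn_pos hst ht (by nlinarith)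
    simpa only [abs_of_pos ht, abs_of_pos hst] using this

theorem div_self_nonneg (t : ℝ) : 0 ≤ f t / t := by
  rcases eq_or_ne t 0 with rfl | ht
  · simp
  have hray : Tendsto (fun s => f (s * t) / (s * t)) (𝓝[>] 0) (𝓝 0) :=
    h.tendsto_div_self.comp ((continuous_mul_const t).tendsto' 0 0 (zero_mul t)
      |>.mono_left nhdsWithin_le_nhds)
  refine le_of_tendsto hray ?_
  filter_upwards [Ioo_mem_nhdsGT one_pos] with s hs
  exact (h.div_self_mul_lt_of_pos hs.1 hs.2 ht).le

theorem div_self_mul_lt (hs : 0 ≤ s) (hs1 : s < 1) (ht : t ≠ 0) :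
    f (s * t) / (s * t) < f t / t := by
  rcases hs.eq_or_lt with rfl | hs
  · have := h.div_self_mul_lt_of_pos one_half_pos one_half_lt_one ht
    simpa using (h.div_self_nonneg _).trans_lt this
  · exact h.div_self_mul_lt_of_pos hs hs1 ht

theorem div_self_lt_mul (hs : 1 < s) (ht : t ≠ 0) : f t / t < f (s * t) / (s * t) := by
  have hs0 : 0 < s := one_pos.trans hs
  have := h.div_self_mul_lt_of_pos (inv_pos.2 hs0) (inv_lt_one_of_one_lt₀ hs)
    (mul_ne_zero hs0.ne' ht)
  rwa [inv_mul_cancel_left₀ hs0.ne'] at this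

theorem apply_mul_self_eq (t : ℝ) : f t * t = f t / t * t ^ 2 := by
  rw [sq, ← mul_assoc, h.div_self_mul_self]

theorem apply_mul_self_nonneg (t : ℝ) : 0 ≤ f t * t := by
  rw [h.apply_mul_self_eq]
  exact mul_nonneg (h.div_self_nonneg t) (sq_nonneg t)

theorem apply_mul_mul_lt (hs : 0 < s) (hs1 : s < 1) (ht : t ≠ 0) :
    f (s * t) * (s * t) < s ^ 2 * (f t * t) := by
  rw [h.apply_mul_self_eq, h.apply_mul_self_eq t, mul_pow, mul_left_comm]
  have := h.div_self_mul_lt hs.le hs1 ht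
  gcongr s ^ 2 * (?_ * t ^ 2)

theorem exists_apply_mul_self_le {ε : ℝ} (hε : 0 < ε) :
    ∃ δ > 0, ∀ t, |t| < δ → f t * t ≤ ε * t ^ 2 := by
  obtain ⟨δ, hδ, hf⟩ := Metric.tendsto_nhds_nhds.1 h.tendsto_div_self ε hε
  refine ⟨δ, hδ, fun t ht => ?_⟩
  rw [h.apply_mul_self_eq]
  have : |f t / t| < ε := by simpa only [Real.dist_0_eq_abs] using hf (x := t) (by simpa using ht)
  gcongr
  exact (le_abs_self _).trans this.le

theorem hasDerivAt_primitive (t : ℝ) : HasDerivAt F (f t) t := by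
  rw [funext h.primitive]
  exact (h.continuous.integral_hasStrictDerivAt 0 t).hasDerivAt

theorem primitive_zero : F 0 = 0 := by
  rw [h.primitive, intervalIntegral.integral_same]

theorem exists_mul_sq_le_primitive (M : ℝ) : ∃ R > 0, ∀ t, R ≤ |t| → M * t ^ 2 ≤ F t := by
  obtain ⟨R, hR, hF⟩ := h.superquadratic M
  refine ⟨R, hR, fun t ht => ?_⟩
  have ht0 : t ≠ 0 := abs_pos.1 (hR.trans_le ht)
  exact (le_div_iff₀ (by positivity)).1 (hF t ht)

theorem primitive_sub_primitive_mul_le (hs : 0 ≤ s) (t : ℝ) :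
    F t - F (s * t) ≤ (1 - s ^ 2) / 2 * (f t * t) := by
  rcases eq_or_ne t 0 with rfl | ht
  · simp
  let k : ℝ → ℝ := fun s => F (s * t) - s ^ 2 / 2 * (f t * t)
  have hk (s : ℝ) : HasDerivAt k (s * t ^ 2 * (f (s * t) / (s * t) - f t / t)) s := by
    have hF := (h.hasDerivAt_primitive (s * t)).comp s ((hasDerivAt_id s).mul_const t)
    have hq := ((hasDerivAt_pow 2 s).div_const 2).mul_const (f t * t)
    refine (hF.sub hq).congr_deriv ?_
    rw [← h.div_self_mul_self (s * t), ← h.div_self_mul_self t]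
    field_simp
    ring
  have hcont : Continuous k := continuous_iff_continuousAt.2 fun s => (hk s).continuousAt
  have hdiff (S : Set ℝ) : DifferentiableOn ℝ k S := fun s _ =>
    (hk s).differentiableAt.differentiableWithinAt
  have hmin : k 1 ≤ k s := by
    rcases le_total s 1 with hs1 | hs1
    · refine antitoneOn_of_deriv_nonpos (convex_Icc 0 1) hcont.continuousOn (hdiff _) ?_
        ⟨hs, hs1⟩ (right_mem_Icc.2 zero_le_one) hs1
      intro r hr
      rw [interior_Icc] at hr
      rw [(hk r).deriv]
      exact mul_nonpos_of_nonneg_of_nonpos (by have := hr.1; positivity)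
        (sub_nonpos.2 (h.div_self_mul_lt hr.1.le hr.2 ht).le)
    · refine monotoneOn_of_deriv_nonneg (convex_Ici 1) hcont.continuousOn (hdiff _) ?_
        self_mem_Ici hs1 hs1
      intro r hr
      rw [interior_Ici] at hr
      have hr0 : 0 < r := one_pos.trans hr
      rw [(hk r).deriv]
      exact mul_nonneg (by positivity) (sub_nonneg.2 (h.div_self_lt_mul hr ht).le)
  simp only [k, one_mul] at hmin
  linarith

theorem quadraticGap_nonneg (t : ℝ) : 0 ≤ quadraticGap f F t := by
  have := h.primitive_sub_primitive_mul_le le_rfl t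
  rw [zero_mul, h.primitive_zero] at this
  rw [quadraticGap]
  linarith

theorem quadraticGap_mul_lt (hs : 0 < s) (hs1 : s < 1) (ht : t ≠ 0) :
    quadraticGap f F (s * t) < quadraticGap f F t := by
  have hF := h.primitive_sub_primitive_mul_le hs.le t
  have hf := h.apply_mul_mul_lt hs hs1 ht
  rw [quadraticGap, quadraticGap]
  linarith

theorem quadraticGap_mul_le (hs : 0 < s) (hs1 : s ≤ 1) (t : ℝ) :
    quadraticGap f F (s * t) ≤ quadraticGap f F t := by
  rcases hs1.eq_or_lt with rfl | hs1
  · rw [one_mul]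
  rcases eq_or_ne t 0 with rfl | ht
  · rw [mul_zero]
  exact (h.quadraticGap_mul_lt hs hs1 ht).le

theorem quadraticGap_zero : quadraticGap f F 0 = 0 := by
  simp [quadraticGap, h.primitive_zero]

theorem quadraticGap_pos (ht : t ≠ 0) : 0 < quadraticGap f F t :=
  (h.quadraticGap_nonneg _).trans_lt (h.quadraticGap_mul_lt one_half_pos one_half_lt_one ht)

theorem primitive_le (t : ℝ) : F t ≤ f t * t / 2 :=
  sub_nonneg.1 (h.quadraticGap_nonneg t)

theorem exists_primitive_sub_eq (s t : ℝ) :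
    ∃ ξ ∈ uIcc s t, F t - F s = f ξ * (t - s) := by
  obtain ⟨ξ, hξ, hF⟩ := domain_mvt (s := univ) (x := s) (y := t) (f := F)
    (fun ξ _ => (h.hasDerivAt_primitive ξ).hasFDerivAt.hasFDerivWithinAt) convex_univ
    (mem_univ _) (mem_univ _)
  exact ⟨ξ, segment_eq_uIcc s t ▸ hξ, by simpa [mul_comm] using hF⟩

theorem primitive_nonneg (t : ℝ) : 0 ≤ F t := by
  obtain ⟨ξ, hξ, hF⟩ := h.exists_primitive_sub_eq 0 t
  rw [h.primitive_zero, sub_zero, sub_zero] at hF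
  have hsign : 0 ≤ ξ * t := by
    rcases mem_uIcc.1 hξ with hξ | hξ
    · exact mul_nonneg hξ.1 (hξ.1.trans hξ.2)
    · exact mul_nonneg_of_nonpos_of_nonpos hξ.2 (hξ.1.trans hξ.2)
  rw [hF, ← h.div_self_mul_self ξ, mul_assoc]
  exact mul_nonneg (h.div_self_nonneg ξ) hsign

end NehariNonlinearity

open scoped InnerProductSpace InnerProduct

section SquareSummable

variable {X : Type*}

theorem H1.hasSum_mul (u v : H1 X) : HasSum (fun x => u x * v x) ⟪u, v⟫_ℝ := by
  simpa [mul_comm] using lp.hasSum_inner (𝕜 := ℝ) u v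

theorem H1.hasSum_sq (u : H1 X) : HasSum (fun x => u x ^ 2) (‖u‖ ^ 2) := by
  simpa [sq] using H1.hasSum_mul u u

theorem H1.abs_apply_le (u : H1 X) (x : X) : |u x| ≤ ‖u‖ :=
  lp.norm_apply_le_norm two_ne_zero u x

theorem H1.exists_apply_ne_zero {u : H1 X} (hu : u ≠ 0) : ∃ x, u x ≠ 0 := by
  contrapose! hu
  exact lp.ext (funext hu)

/-- The action of `ℓ^∞` on `ℓ²` by pointwise multiplication. -/
noncomputable def mulL : lp (fun _ : X => ℝ) ∞ →L[ℝ] H1 X →L[ℝ] H1 X :=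
  lp.holderL 2 (fun _ => ContinuousLinearMap.mul ℝ ℝ) (K := 1) fun _ => by simp

@[simp]
theorem mulL_apply (a : lp (fun _ : X => ℝ) ∞) (u : H1 X) (x : X) : mulL a u x = a x * u x := rfl

theorem memℓp_comp {g : ℝ → ℝ} (hg : Continuous g) (u : H1 X) :
    Memℓp (fun x => g (u x)) ∞ := by
  obtain ⟨M, hM⟩ := (isCompact_closedBall (0 : ℝ) ‖u‖).exists_bound_of_continuousOn hg.continuousOn
  refine memℓp_infty ⟨M, ?_⟩
  rintro _ ⟨x, rfl⟩
  exact hM _ (mem_closedBall_zero_iff.2 (H1.abs_apply_le u x))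

/-- Composition with a continuous function, as a map from `ℓ²` to `ℓ^∞`. -/
def compBounded (g : C(ℝ, ℝ)) (u : H1 X) : lp (fun _ : X => ℝ) ∞ :=
  ⟨fun x => g (u x), memℓp_comp g.continuous u⟩

theorem continuous_compBounded (g : C(ℝ, ℝ)) : Continuous (compBounded g : H1 X → _) := by
  rw [Metric.continuous_iff]
  intro u ε hε
  have huc := (isCompact_closedBall (0 : ℝ) (‖u‖ + 1)).uniformContinuousOn_of_continuous
    g.continuous.continuousOn
  obtain ⟨δ, hδ, hg⟩ := Metric.uniformContinuousOn_iff.1 huc (ε / 2) (half_pos hε)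
  refine ⟨min δ 1, lt_min hδ one_pos, fun v hv => ?_⟩
  have hvu : ‖v - u‖ < min δ 1 := by rwa [← dist_eq_norm]
  have hv1 : ‖v‖ ≤ ‖u‖ + 1 := by
    linarith [norm_le_norm_add_norm_sub' v u, hvu.le.trans (min_le_right δ 1)]
  rw [dist_eq_norm]
  refine (lp.norm_le_of_forall_le (half_pos hε).le fun x => ?_).trans_lt (half_lt_self hε)
  refine (hg (v x) ?_ (u x) ?_ ?_).le
  · exact mem_closedBall_zero_iff.2 ((H1.abs_apply_le v x).trans hv1)
  · exact mem_closedBall_zero_iff.2 ((H1.abs_apply_le u x).trans (by linarith))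
  · exact (H1.abs_apply_le (v - u) x).trans_lt (hvu.trans_le (min_le_left δ 1))

theorem memℓp_comp_equiv (e : X ≃ X) (u : H1 X) : Memℓp (fun x => u (e x)) 2 := by
  rw [memℓp_gen_iff (by norm_num)]
  simpa [Function.comp_def] using (e.hasSum_iff.2 (H1.hasSum_sq u)).summable

/-- Precomposition with a permutation, as an isometry of `ℓ²`. -/
def reindex (e : X ≃ X) : H1 X →ₗᵢ[ℝ] H1 X where
  toFun u := ⟨fun x => u (e x), memℓp_comp_equiv e u⟩
  map_add' _ _ := rfl
  map_smul' _ _ := rfl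
  norm_map' u := by
    rw [← sq_eq_sq₀ (norm_nonneg _) (norm_nonneg _)]
    exact (H1.hasSum_sq _).unique (e.hasSum_iff.2 (H1.hasSum_sq u))

@[simp]
theorem reindex_apply (e : X ≃ X) (u : H1 X) (x : X) : reindex e u x = u (e x) := rfl

section Truncate

variable [DecidableEq X]

/-- The function obtained from `u` by setting its values on `A` to `0`. -/
noncomputable def truncate (A : Finset X) (u : H1 X) : H1 X := u - ∑ i ∈ A, lp.single 2 i (u i)

theorem truncate_apply (A : Finset X) (u : H1 X) (x : X) :
    truncate A u x = if x ∈ A then 0 else u x := by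
  simp only [truncate, lp.coeFn_sub, lp.coeFn_sum, Pi.sub_apply, Finset.sum_apply, lp.single_apply,
    Pi.single_apply, Finset.sum_ite_eq]
  split_ifs <;> simp

theorem tendsto_truncate (u : H1 X) : Tendsto (fun A => truncate A u) atTop (𝓝 0) := by
  simpa [truncate, HasSum] using (lp.hasSum_single (by norm_num) u).const_sub u

end Truncate

end SquareSummable

section Schrodinger

variable {X : Type*} [AddGroup X]

/-- The pointwise energy `|∇u|² + V u²` on the Cayley graph with steps `D`. -/
noncomputable def schrodingerDensity (D : Finset X) (V u : X → ℝ) (x : X) : ℝ :=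
  1 / 2 * ∑ d ∈ D, (u (x + d) - u x) ^ 2 + V x * u x ^ 2

/-- The operator `u ↦ u(· + d) - u`. -/
noncomputable def difference (d : X) : H1 X →L[ℝ] H1 X :=
  (reindex (Equiv.addRight d)).toContinuousLinearMap - ContinuousLinearMap.id ℝ (H1 X)

/-- The operator with quadratic form `∑ x, schrodingerDensity D V u x`, which is `-Δ + V` when
`D = -D`. -/
noncomputable def schrodinger (D : Finset X) (V : lp (fun _ : X => ℝ) ∞) : H1 X →L[ℝ] H1 X :=
  (1 / 2 : ℝ) • ∑ d ∈ D, (difference d)† ∘L difference d + mulL V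

variable (D : Finset X) (V : lp (fun _ : X => ℝ) ∞)

theorem isSelfAdjoint_schrodinger : IsSelfAdjoint (schrodinger D V) := by
  refine .add (.smul (.all _) (isSelfAdjoint_sum _ fun d _ => ?_)) ?_
  · exact (ContinuousLinearMap.isPositive_adjoint_comp_self (difference d)).isSelfAdjoint
  · refine ContinuousLinearMap.isSelfAdjoint_iff_isSymmetric.2 fun u v => ?_
    refine (H1.hasSum_mul (mulL V u) v).unique ?_
    simpa only [mulL_apply, mul_assoc, mul_left_comm] using! H1.hasSum_mul u (mulL V v)

theorem hasSum_schrodingerDensity (u : H1 X) :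
    HasSum (schrodingerDensity D V u) ⟪u, schrodinger D V u⟫_ℝ := by
  have hdiff (d : X) : HasSum (fun x => (u (x + d) - u x) ^ 2)
      ⟪u, ((difference d)† ∘L difference d) u⟫_ℝ := by
    rw [ContinuousLinearMap.comp_apply, ContinuousLinearMap.adjoint_inner_right,
      real_inner_self_eq_norm_sq]
    exact H1.hasSum_sq (difference d u)
  have hV : HasSum (fun x => V x * u x ^ 2) ⟪u, mulL V u⟫_ℝ := by
    refine (H1.hasSum_mul u (mulL V u)).congr_fun fun x => ?_
    rw [mulL_apply]
    ring
  simp only [schrodinger, add_apply, smul_apply, sum_apply, inner_add_right,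
    inner_smul_right, inner_sum]
  exact ((hasSum_sum fun d _ => hdiff d).mul_left (1 / 2)).add hV

variable {D V}

theorem mul_sq_le_schrodingerDensity {V u : X → ℝ} {V₀ : ℝ} {x : X} (hV : V₀ ≤ V x) :
    V₀ * u x ^ 2 ≤ schrodingerDensity D V u x :=
  (mul_le_mul_of_nonneg_right hV (sq_nonneg _)).trans (le_add_of_nonneg_left (by positivity))

theorem mul_norm_sq_le_inner_schrodinger {V₀ : ℝ} (hV : ∀ x, V₀ ≤ V x) (u : H1 X) :
    V₀ * ‖u‖ ^ 2 ≤ ⟪u, schrodinger D V u⟫_ℝ :=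
  hasSum_le (fun x => mul_sq_le_schrodingerDensity (hV x)) ((H1.hasSum_sq u).mul_left V₀)
    (hasSum_schrodingerDensity D V u)

end Schrodinger

theorem hasFDerivAt_of_forall_exists_inner {E : Type*} [NormedAddCommGroup E]
    [InnerProductSpace ℝ E] {Ψ : E → ℝ} {G : E → E} {u : E} (hG : ContinuousAt G u)
    (hΨ : ∀ v, ∃ w, ‖w - u‖ ≤ ‖v - u‖ ∧ Ψ v - Ψ u = ⟪G w, v - u⟫_ℝ) :
    HasFDerivAt Ψ (innerSL ℝ (G u)) u := by
  refine .of_isLittleO (Asymptotics.isLittleO_iff.2 fun ε hε => ?_)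
  obtain ⟨δ, hδ, hGδ⟩ := Metric.continuousAt_iff.1 hG ε hε
  filter_upwards [Metric.ball_mem_nhds u hδ] with v hv
  obtain ⟨w, hw, hΨ⟩ := hΨ v
  rw [hΨ, innerSL_apply_apply, ← inner_sub_left]
  refine (norm_inner_le_norm _ _).trans ?_
  gcongr
  rw [← dist_eq_norm]
  refine (hGδ ?_).le
  rw [dist_eq_norm]
  exact hw.trans_lt (by rwa [← dist_eq_norm])

section Functionals

variable {X : Type*} {f F : ℝ → ℝ}

/-- The Nemytskii operator `u ↦ f ∘ u` of `ℓ²`. -/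
noncomputable def NehariNonlinearity.nemytskii (h : NehariNonlinearity f F) (u : H1 X) : H1 X :=
  mulL (compBounded ⟨_, h.continuous_div_self⟩ u) u

/-- The energy functional `⟪u, Lu⟫/2 - ∑ F(u)` of the equation `Lu = f(u)`. -/
noncomputable def energyFunctional (F : ℝ → ℝ) (L : H1 X →L[ℝ] H1 X) (u : H1 X) : ℝ :=
  1 / 2 * ⟪u, L u⟫_ℝ - ∑' x, F (u x)

/-- The functional `⟪u, Lu⟫ - ∑ f(u)u`, the derivative of the energy functional at `u` in the
direction `u`; its nonzero zeros form the Nehari manifold. -/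
noncomputable def nehariFunctional (f : ℝ → ℝ) (L : H1 X →L[ℝ] H1 X) (u : H1 X) : ℝ :=
  ⟪u, L u⟫_ℝ - ∑' x, f (u x) * u x

/-- The total of `quadraticGap`, which is the energy on the Nehari manifold. -/
noncomputable def gapFunctional (f F : ℝ → ℝ) (u : H1 X) : ℝ := ∑' x, quadraticGap f F (u x)

variable (h : NehariNonlinearity f F) {L : H1 X →L[ℝ] H1 X}

namespace NehariNonlinearity

@[simp]
theorem nemytskii_apply (u : H1 X) (x : X) : h.nemytskii u x = f (u x) :=
  h.div_self_mul_self (u x)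

theorem continuous_nemytskii : Continuous (h.nemytskii (X := X)) :=
  (mulL.continuous.comp (continuous_compBounded _)).clm_apply continuous_id

theorem hasSum_apply_mul (u : H1 X) : HasSum (fun x => f (u x) * u x) ⟪h.nemytskii u, u⟫_ℝ := by
  simpa only [nemytskii_apply] using H1.hasSum_mul (h.nemytskii u) u

include h in
theorem summable_primitive (u : H1 X) : Summable fun x => F (u x) :=
  .of_nonneg_of_le (fun _ => h.primitive_nonneg _) (fun _ => h.primitive_le _)
    ((h.hasSum_apply_mul u).summable.div_const 2)

include h in
theorem hasSum_quadraticGap (u : H1 X) :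
    HasSum (fun x => quadraticGap f F (u x)) (gapFunctional f F u) :=
  (((h.hasSum_apply_mul u).summable.div_const 2).sub (h.summable_primitive u)).hasSum

include h in
theorem gapFunctional_nonneg (u : H1 X) : 0 ≤ gapFunctional f F u :=
  tsum_nonneg fun _ => h.quadraticGap_nonneg _

theorem nehariFunctional_eq_inner (L : H1 X →L[ℝ] H1 X) (u : H1 X) :
    nehariFunctional f L u = ⟪L u - h.nemytskii u, u⟫_ℝ := by
  rw [nehariFunctional, (h.hasSum_apply_mul u).tsum_eq, inner_sub_left, real_inner_comm]

include h in
theorem energyFunctional_eq (L : H1 X →L[ℝ] H1 X) (u : H1 X) :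
    energyFunctional F L u = nehariFunctional f L u / 2 + gapFunctional f F u := by
  have hf := ((h.hasSum_apply_mul u).div_const 2).sub (h.summable_primitive u).hasSum
  rw [gapFunctional, energyFunctional, nehariFunctional]
  simp only [quadraticGap]
  rw [hf.tsum_eq, (h.hasSum_apply_mul u).tsum_eq]
  ring

theorem exists_tsum_primitive_sub_eq (u v : H1 X) :
    ∃ w : H1 X, ‖w - u‖ ≤ ‖v - u‖ ∧
      ∑' x, F (v x) - ∑' x, F (u x) = ⟪h.nemytskii w, v - u⟫_ℝ := by
  choose ξ hξ hF using fun x => h.exists_primitive_sub_eq (u x) (v x)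
  have hle (x : X) : ‖ξ x - u x‖ ≤ ‖(v - u) x‖ := abs_sub_left_of_mem_uIcc (hξ x)
  let k : H1 X := ⟨fun x => ξ x - u x, (lp.memℓp (v - u)).mono' hle⟩
  refine ⟨u + k, ?_, ?_⟩
  · rw [add_sub_cancel_left]
    exact lp.norm_mono two_ne_zero hle
  · refine ((h.summable_primitive v).hasSum.sub (h.summable_primitive u).hasSum).unique ?_
    refine (H1.hasSum_mul (h.nemytskii (u + k)) (v - u)).congr_fun fun x => ?_
    rw [hF, nemytskii_apply]
    congr 2
    exact (add_sub_cancel (u x) (ξ x)).symm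

theorem hasFDerivAt_tsum_primitive (u : H1 X) :
    HasFDerivAt (fun v : H1 X => ∑' x, F (v x)) (innerSL ℝ (h.nemytskii u)) u :=
  hasFDerivAt_of_forall_exists_inner h.continuous_nemytskii.continuousAt
    (h.exists_tsum_primitive_sub_eq u)

theorem hasFDerivAt_energyFunctional (hL : IsSelfAdjoint L) (u : H1 X) :
    HasFDerivAt (energyFunctional F L) (innerSL ℝ (L u - h.nemytskii u)) u := by
  have hquad := ((hasFDerivAt_id u).inner ℝ L.hasFDerivAt).const_mul (1 / 2)
  refine (hquad.sub (h.hasFDerivAt_tsum_primitive u)).congr_fderiv ?_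
  ext v
  have hsymm : ⟪u, L v⟫_ℝ = ⟪L u, v⟫_ℝ :=
    (ContinuousLinearMap.isSelfAdjoint_iff_isSymmetric.1 hL u v).symm
  simp [hsymm, real_inner_comm (L u) v]
  ring

theorem hasStrictFDerivAt_energyFunctional (hL : IsSelfAdjoint L) (u : H1 X) :
    HasStrictFDerivAt (energyFunctional F L) (innerSL ℝ (L u - h.nemytskii u)) u :=
  hasStrictFDerivAt_of_hasFDerivAt_of_continuousAt
    (.of_forall (h.hasFDerivAt_energyFunctional hL))
    ((innerSL ℝ).continuous.comp (L.continuous.sub h.continuous_nemytskii)).continuousAt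

include h in
theorem fderiv_energyFunctional_apply_self (hL : IsSelfAdjoint L) (u : H1 X) :
    fderiv ℝ (energyFunctional F L) u u = nehariFunctional f L u := by
  rw [(h.hasFDerivAt_energyFunctional hL u).fderiv, innerSL_apply_apply,
    h.nehariFunctional_eq_inner]

include h in
theorem continuous_nehariFunctional (L : H1 X →L[ℝ] H1 X) : Continuous (nehariFunctional f L) :=
  ((L.continuous.sub h.continuous_nemytskii).inner continuous_id).congr fun u =>
    (h.nehariFunctional_eq_inner L u).symm

end NehariNonlinearity

end Functionals

section Nehari

variable {X : Type*} {f F : ℝ → ℝ} {L : H1 X →L[ℝ] H1 X}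

theorem inner_smul_smul_map (L : H1 X →L[ℝ] H1 X) (s : ℝ) (u : H1 X) :
    ⟪s • u, L (s • u)⟫_ℝ = s ^ 2 * ⟪u, L u⟫_ℝ := by
  rw [map_smul, real_inner_smul_left, real_inner_smul_right]
  ring

namespace NehariNonlinearity

variable (h : NehariNonlinearity f F)
include h

theorem energyFunctional_smul_le (L : H1 X →L[ℝ] H1 X) (u : H1 X) {s : ℝ} (hs : 0 ≤ s) :
    energyFunctional F L (s • u) ≤
      energyFunctional F L u + (s ^ 2 - 1) / 2 * nehariFunctional f L u := by
  have hF := hasSum_le (fun x => h.primitive_sub_primitive_mul_le hs (u x))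
    ((h.summable_primitive u).hasSum.sub (h.summable_primitive (s • u)).hasSum)
    ((h.hasSum_apply_mul u).mul_left ((1 - s ^ 2) / 2))
  rw [energyFunctional, energyFunctional, nehariFunctional, inner_smul_smul_map,
    (h.hasSum_apply_mul u).tsum_eq]
  linarith

theorem mul_nehariFunctional_lt (L : H1 X →L[ℝ] H1 X) {u : H1 X} (hu : u ≠ 0) {s : ℝ} (hs : 0 < s)
    (hs1 : s < 1) : s ^ 2 * nehariFunctional f L u < nehariFunctional f L (s • u) := by
  obtain ⟨x, hx⟩ := H1.exists_apply_ne_zero hu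
  have hle (y : X) : f ((s • u) y) * (s • u) y ≤ s ^ 2 * (f (u y) * u y) := by
    rcases eq_or_ne (u y) 0 with hy | hy
    · simp [hy]
    · exact (h.apply_mul_mul_lt hs hs1 hy).le
  have hf := hasSum_lt hle (h.apply_mul_mul_lt hs hs1 hx) (h.hasSum_apply_mul (s • u))
    ((h.hasSum_apply_mul u).mul_left (s ^ 2))
  rw [nehariFunctional, nehariFunctional, inner_smul_smul_map, (h.hasSum_apply_mul u).tsum_eq,
    (h.hasSum_apply_mul (s • u)).tsum_eq]
  linarith

theorem nehariFunctional_smul_neg {u : H1 X} (hu : u ≠ 0) (hI : nehariFunctional f L u = 0) {s : ℝ}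
    (hs : 1 < s) : nehariFunctional f L (s • u) < 0 := by
  have hs0 : 0 < s := one_pos.trans hs
  have := h.mul_nehariFunctional_lt L (smul_ne_zero hs0.ne' hu) (inv_pos.2 hs0)
    (inv_lt_one_of_one_lt₀ hs)
  rw [inv_smul_smul₀ hs0.ne', hI] at this
  exact neg_of_mul_neg_right this (by positivity)

variable {V₀ : ℝ} (hV₀ : 0 < V₀) (hL : ∀ u, V₀ * ‖u‖ ^ 2 ≤ ⟪u, L u⟫_ℝ)
include hV₀ hL

omit h in
theorem inner_map_self_pos {u : H1 X} (hu : u ≠ 0) : 0 < ⟪u, L u⟫_ℝ :=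
  (by positivity : 0 < V₀ * ‖u‖ ^ 2).trans_le (hL u)

theorem exists_half_inner_le_nehariFunctional :
    ∃ δ > 0, ∀ u : H1 X, (∀ x, |u x| < δ) → ⟪u, L u⟫_ℝ / 2 ≤ nehariFunctional f L u := by
  obtain ⟨δ, hδ, hf⟩ := h.exists_apply_mul_self_le (half_pos hV₀)
  refine ⟨δ, hδ, fun u hu => ?_⟩
  have := hasSum_le (fun x => hf _ (hu x)) (h.hasSum_apply_mul u)
    ((H1.hasSum_sq u).mul_left (V₀ / 2))
  rw [nehariFunctional, (h.hasSum_apply_mul u).tsum_eq]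
  linarith [hL u]

theorem exists_le_abs_apply :
    ∃ δ > 0, ∀ u : H1 X, u ≠ 0 → nehariFunctional f L u ≤ 0 → ∃ x, δ ≤ |u x| := by
  obtain ⟨δ, hδ, hI⟩ := h.exists_half_inner_le_nehariFunctional hV₀ hL
  refine ⟨δ, hδ, fun u hu hu0 => ?_⟩
  by_contra! hsmall
  linarith [hI u hsmall, inner_map_self_pos hV₀ hL hu]

theorem exists_smul_nehariFunctional_eq_zero {u : H1 X} (hu : u ≠ 0)
    (hI : nehariFunctional f L u ≤ 0) :
    ∃ t : ℝ, t • u ≠ 0 ∧ nehariFunctional f L (t • u) = 0 ∧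
      gapFunctional f F (t • u) ≤ gapFunctional f F u := by
  obtain ⟨δ, hδ, hpos⟩ := h.exists_le_abs_apply hV₀ hL
  have hnorm : 0 < ‖u‖ := norm_pos_iff.2 hu
  obtain ⟨r, hr, hr1⟩ : ∃ r, 0 < r ∧ r < min 1 (δ / ‖u‖) := exists_between (by positivity)
  have hIr : 0 ≤ nehariFunctional f L (r • u) := by
    by_contra! hneg
    obtain ⟨x, hx⟩ := hpos _ (smul_ne_zero hr.ne' hu) hneg.le
    refine (hx.trans (H1.abs_apply_le _ x)).not_gt ?_
    rw [norm_smul, Real.norm_of_nonneg hr.le, ← lt_div_iff₀ hnorm]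
    exact hr1.trans_le (min_le_right _ _)
  have hcont : ContinuousOn (fun t : ℝ => nehariFunctional f L (t • u)) (Icc r 1) :=
    ((h.continuous_nehariFunctional L).comp (continuous_id.smul continuous_const)).continuousOn
  obtain ⟨t, ht, hIt⟩ := intermediate_value_Icc' (hr1.le.trans (min_le_left _ _)) hcont
    (show (0 : ℝ) ∈ Icc _ _ from ⟨by simpa using hI, hIr⟩)
  have ht0 : 0 < t := hr.trans_le ht.1
  exact ⟨t, smul_ne_zero ht0.ne' hu, hIt, hasSum_le (fun x => h.quadraticGap_mul_le ht0 ht.2 (u x))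
    (h.hasSum_quadraticGap (t • u)) (h.hasSum_quadraticGap u)⟩

theorem exists_nehariFunctional_eq_zero [Nonempty X] :
    ∃ u : H1 X, u ≠ 0 ∧ nehariFunctional f L u = 0 := by
  classical
  obtain ⟨o⟩ := ‹Nonempty X›
  let e : H1 X := lp.single 2 o 1
  obtain ⟨R, hR, hF⟩ := h.exists_mul_sq_le_primitive (⟪e, L e⟫_ℝ / 2)
  have hRe : (R • e) o = R := by simp [e]
  have hne : R • e ≠ 0 := fun h0 => hR.ne' (by rw [← hRe, h0]; rfl)
  have hI : nehariFunctional f L (R • e) ≤ 0 := by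
    have hle := le_hasSum (h.hasSum_apply_mul (R • e)) o fun x _ => h.apply_mul_self_nonneg _
    rw [hRe] at hle
    rw [nehariFunctional, inner_smul_smul_map, (h.hasSum_apply_mul (R • e)).tsum_eq]
    linarith [hF R (le_abs_self R), h.primitive_le R]
  obtain ⟨t, ht, hIt, -⟩ := h.exists_smul_nehariFunctional_eq_zero hV₀ hL hne hI
  exact ⟨_, ht, hIt⟩

theorem exists_inner_le_mul_apply_sq (K : ℝ) :
    ∃ C > 0, ∀ u : H1 X, u ≠ 0 → nehariFunctional f L u = 0 → energyFunctional F L u ≤ K →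
      ∃ x, ⟪u, L u⟫_ℝ ≤ C * u x ^ 2 := by
  obtain ⟨δ, hδ, hsmall⟩ := h.exists_half_inner_le_nehariFunctional hV₀ hL
  refine ⟨4 * (|K| + 1) / δ ^ 2, by positivity, fun u hu hI hK => ?_⟩
  have hQ : 0 < ⟪u, L u⟫_ℝ := inner_map_self_pos hV₀ hL hu
  set s := √(4 * (|K| + 1) / ⟪u, L u⟫_ℝ) with hs
  have hs2 : s ^ 2 * ⟪u, L u⟫_ℝ = 4 * (|K| + 1) := by
    rw [hs, Real.sq_sqrt (by positivity), div_mul_cancel₀ _ hQ.ne']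
  obtain ⟨x, hx⟩ : ∃ x, δ ≤ |s * u x| := by
    by_contra! hlt
    have hIs := hsmall (s • u) hlt
    have hE := h.energyFunctional_smul_le L u (Real.sqrt_nonneg _ : 0 ≤ s)
    rw [h.energyFunctional_eq, hI] at hE
    rw [inner_smul_smul_map, hs2] at hIs
    linarith [h.gapFunctional_nonneg (s • u), le_abs_self K]
  refine ⟨x, ?_⟩
  have hδx : δ ^ 2 ≤ s ^ 2 * u x ^ 2 := by
    rw [← mul_pow, ← sq_abs (s * u x)]
    gcongr
  rw [← hs2, div_mul_eq_mul_div, le_div_iff₀ (by positivity)]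
  nlinarith

theorem exists_norm_le (K : ℝ) :
    ∃ R, ∀ u : H1 X, u ≠ 0 → nehariFunctional f L u = 0 → energyFunctional F L u ≤ K → ‖u‖ ≤ R := by
  obtain ⟨C, hC, hpeak⟩ := h.exists_inner_le_mul_apply_sq hV₀ hL K
  obtain ⟨R, -, hF⟩ := h.exists_mul_sq_le_primitive C
  refine ⟨√(C * R ^ 2 / V₀), fun u hu hI hK => ?_⟩
  have hQ : 0 < ⟪u, L u⟫_ℝ := inner_map_self_pos hV₀ hL hu
  obtain ⟨x, hx⟩ := hpeak u hu hI hK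
  have hFx : F (u x) ≤ ⟪u, L u⟫_ℝ / 2 := by
    have hle := le_hasSum (h.summable_primitive u).hasSum x fun y _ => h.primitive_nonneg _
    have hE := h.energyFunctional_eq L u
    rw [hI, energyFunctional] at hE
    linarith [h.gapFunctional_nonneg u]
  have huR : |u x| < R := by
    by_contra! hRu
    linarith [hF _ hRu]
  refine Real.le_sqrt_of_sq_le ((le_div_iff₀' hV₀).2 ((hL u).trans (hx.trans ?_)))
  rw [← sq_abs]
  gcongr

end NehariNonlinearity

end Nehari

section NaturalConstraint

theorem eventually_lt_of_hasStrictFDerivAt_of_apply_neg {E : Type*} [NormedAddCommGroup E]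
    [NormedSpace ℝ E] {Φ : E → ℝ} {Φ' : E →L[ℝ] ℝ} {u v : E} (hΦ : HasStrictFDerivAt Φ Φ' u)
    (hv : Φ' v < 0) : ∀ᶠ p : E × ℝ in 𝓝 (u, 0), 0 < p.2 → Φ (p.1 + p.2 • v) < Φ p.1 := by
  have htendsto : Tendsto (fun p : E × ℝ => (p.1 + p.2 • v, p.1)) (𝓝 (u, 0)) (𝓝 (u, u)) :=
    Continuous.tendsto' (by fun_prop) _ _ (by simp)
  have hc : 0 < -Φ' v / (‖v‖ + 1) := div_pos (neg_pos.2 hv) (by positivity)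
  filter_upwards [htendsto.eventually (hΦ.isLittleO.def hc)] with p hp hp0
  rw [add_sub_cancel_left, map_smul, smul_eq_mul, norm_smul, Real.norm_of_nonneg hp0.le] at hp
  have hlt : -Φ' v / (‖v‖ + 1) * (p.2 * ‖v‖) < p.2 * -Φ' v := by
    rw [div_mul_eq_mul_div, div_lt_iff₀ (by positivity)]
    nlinarith [mul_pos hp0 (neg_pos.2 hv)]
  linarith [(le_abs_self _).trans hp]

theorem frequently_eq_zero_of_sign_change {g : ℝ × ℝ → ℝ} (hg : Continuous g) {a : ℝ}
    (hpos : ∀ᶠ t in 𝓝[<] a, 0 < g (t, 0)) (hneg : ∀ᶠ t in 𝓝[>] a, g (t, 0) < 0) :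
    ∃ᶠ p in 𝓝 (a, 0), 0 < p.2 ∧ g p = 0 := by
  refine Metric.nhds_basis_ball.frequently_iff.2 fun {ε} hε => ?_
  obtain ⟨t₁, hg₁, ht₁⟩ := (hpos.and (Ioo_mem_nhdsLT (sub_lt_self a hε))).exists
  obtain ⟨t₂, hg₂, ht₂⟩ := (hneg.and (Ioo_mem_nhdsGT (lt_add_of_pos_right a hε))).exists
  have hslice (t : ℝ) : Tendsto (fun r => g (t, r)) (𝓝[>] 0) (𝓝 (g (t, 0))) :=
    ((hg.comp (Continuous.prodMk_right t)).tendsto 0).mono_left nhdsWithin_le_nhds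
  obtain ⟨r, ⟨hr₁, hr₂⟩, hr⟩ := ((((hslice t₁).eventually_const_lt hg₁).and
    ((hslice t₂).eventually_lt_const hg₂)).and (Ioo_mem_nhdsGT hε)).exists
  obtain ⟨t, ht, hgt⟩ := intermediate_value_Icc' (ht₁.2.trans ht₂.1).le
    (hg.comp (Continuous.prodMk_left r)).continuousOn ⟨hr₂.le, hr₁.le⟩
  refine ⟨(t, r), ?_, hr.1, hgt⟩
  rw [Metric.mem_ball, Prod.dist_eq, max_lt_iff, Real.dist_eq, Real.dist_eq, abs_lt, abs_lt]
  exact ⟨⟨by linarith [ht₁.1, ht.1], by linarith [ht₂.2, ht.2]⟩,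
    by linarith [hr.1], by linarith [hr.2]⟩

/- If the gradient at `u` did not vanish, moving the ray `t ↦ t • u` slightly along a descent
direction would still meet the Nehari manifold, since `nehariFunctional` changes sign across `u`
on the ray, at a point of energy below the maximum `Φ(u)` of `Φ` on the ray. -/
theorem NehariNonlinearity.map_eq_nemytskii_of_minimizer {X : Type*} {f F : ℝ → ℝ}
    (h : NehariNonlinearity f F) {L : H1 X →L[ℝ] H1 X} (hL : IsSelfAdjoint L) {u : H1 X}
    (hu : u ≠ 0) (hI : nehariFunctional f L u = 0)
    (hmin : ∀ v, v ≠ 0 → nehariFunctional f L v = 0 →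
      energyFunctional F L u ≤ energyFunctional F L v) :
    L u = h.nemytskii u := by
  set w := L u - h.nemytskii u
  by_contra! hne
  have hw0 : w ≠ 0 := sub_ne_zero.2 hne
  let γ : ℝ × ℝ → H1 X := fun p => p.1 • u + p.2 • -w
  have hγ : Continuous γ := by fun_prop
  have hγ1 : γ (1, 0) = u := by simp [γ]
  have hslope : innerSL ℝ w (-w) < 0 := by
    rw [innerSL_apply_apply, inner_neg_right, neg_lt_zero]
    exact real_inner_self_pos.2 hw0
  have hray : Tendsto (fun p : ℝ × ℝ => (p.1 • u, p.2)) (𝓝 (1, 0)) (𝓝 (u, 0)) :=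
    Continuous.tendsto' (by fun_prop) _ _ (by simp)
  have hdescent : ∀ᶠ p : ℝ × ℝ in 𝓝 (1, 0), 0 < p.2 →
      energyFunctional F L (γ p) < energyFunctional F L (p.1 • u) :=
    hray.eventually <| eventually_lt_of_hasStrictFDerivAt_of_apply_neg
      (h.hasStrictFDerivAt_energyFunctional hL u) hslope
  have hcross : ∃ᶠ p in 𝓝 (1, 0), 0 < p.2 ∧ nehariFunctional f L (γ p) = 0 := by
    refine frequently_eq_zero_of_sign_change ((h.continuous_nehariFunctional L).comp hγ) ?_ ?_
    · filter_upwards [Ioo_mem_nhdsLT one_pos] with t ht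
      simpa [γ, hI] using h.mul_nehariFunctional_lt L hu ht.1 ht.2
    · filter_upwards [self_mem_nhdsWithin] with t ht
      simpa [γ] using h.nehariFunctional_smul_neg hu hI ht
  have hγne : ∀ᶠ p in 𝓝 (1, 0), γ p ≠ 0 := hγ.continuousAt.eventually_ne (hγ1.symm ▸ hu)
  have hpos : ∀ᶠ p : ℝ × ℝ in 𝓝 (1, 0), 0 < p.1 := continuousAt_fst.eventually_const_lt one_pos
  obtain ⟨p, ⟨hp, hIp⟩, hdesc, hne, hp1⟩ :=
    (hcross.and_eventually (hdescent.and (hγne.and hpos))).exists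
  have hmax := h.energyFunctional_smul_le L u hp1.le
  rw [hI, mul_zero, add_zero] at hmax
  exact ((hmin _ hne hIp).trans_lt (hdesc hp)).not_ge hmax

end NaturalConstraint

section Concentration

theorem sub_eq_sum_sub_of_hasSum {X : Type*} {a b : X → ℝ} {α β : ℝ} (ha : HasSum a α)
    (hb : HasSum b β) {B : Finset X} (hB : ∀ x ∉ B, a x = b x) :
    α - β = ∑ x ∈ B, (a x - b x) :=
  (ha.sub hb).unique <| hasSum_sum_of_ne_finset_zero (L := .unconditional X)
    fun x hx => sub_eq_zero.2 (hB x hx)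

theorem exists_tendsto_apply_of_norm_le {ι X : Type*} (l : Ultrafilter ι) {u : ι → H1 X} {R : ℝ}
    (hu : ∀ i, ‖u i‖ ≤ R) : ∃ v : H1 X, ∀ x, Tendsto (fun i => u i x) l (𝓝 (v x)) := by
  have hmem (i : ι) : (⇑(u i) : X → ℝ) ∈ univ.pi fun _ : X => Metric.closedBall (0 : ℝ) R :=
    fun x _ => mem_closedBall_zero_iff.2 ((H1.abs_apply_le (u i) x).trans (hu i))
  have hcpt := isCompact_univ_pi fun _ : X => isCompact_closedBall (0 : ℝ) R
  obtain ⟨v, -, hv⟩ := hcpt.ultrafilter_le_nhds' (l.map fun i => ⇑(u i))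
    (Ultrafilter.mem_map.2 (univ_mem' hmem))
  have hlim : Tendsto (fun i => ⇑(u i)) l (𝓝 v) := hv
  exact ⟨⟨v, lp.memℓp_of_tendsto (isBounded_iff_forall_norm_le.2 ⟨R, forall_mem_range.2 hu⟩) hlim⟩,
    tendsto_pi_nhds.1 hlim⟩

variable {X : Type*} [AddGroup X]

/- Along an ultrafilter `z` is either eventually constant, and then `y = 0` serves, or it escapes to
infinity, and then `y = z` serves. -/
theorem exists_tendsto_translate {ι : Type*} (l : Ultrafilter ι) {V : X → ℝ} {Vinf : ℝ}
    (hV : ∀ x, V x ≤ Vinf) (hVlim : Tendsto V cofinite (𝓝 Vinf)) (z : ι → X) :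
    ∃ (y : ι → X) (x₀ : X) (w : X → ℝ), (∀ᶠ i in l, y i + x₀ = z i) ∧ (∀ x, V x ≤ w x) ∧
      ∀ x, Tendsto (fun i => V (y i + x)) l (𝓝 (w x)) := by
  by_cases hz : ∃ x₀, ∀ᶠ i in l, z i = x₀
  · obtain ⟨x₀, hx₀⟩ := hz
    refine ⟨0, x₀, V, hx₀.mono fun i hi => ?_, fun _ => le_rfl, fun x => ?_⟩
    · rw [hi, Pi.zero_apply, zero_add]
    · simp
  · have hcof : Tendsto z l cofinite := le_cofinite_iff_eventually_ne.2 fun x =>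
      Ultrafilter.eventually_not.2 (not_exists.1 hz x)
    exact ⟨z, 0, fun _ => Vinf, .of_forall fun i => add_zero _, hV, fun x =>
      hVlim.comp ((add_left_injective x).tendsto_cofinite.comp hcof)⟩

/-- The summand `|∇u|² + V u² - f(u)u` of the Nehari functional. -/
noncomputable def nehariDensity (D : Finset X) (f : ℝ → ℝ) (V u : X → ℝ) (x : X) : ℝ :=
  schrodingerDensity D V u x - f (u x) * u x

theorem nehariDensity_add_left (D : Finset X) (f : ℝ → ℝ) (V u : X → ℝ) (y x : X) :
    nehariDensity D f V u (y + x) =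
      nehariDensity D f (fun x => V (y + x)) (fun x => u (y + x)) x := by
  simp only [nehariDensity, schrodingerDensity, add_assoc]

theorem nehariDensity_sub_le {D : Finset X} {f : ℝ → ℝ} {V W u v : X → ℝ} {x : X}
    (hVW : V x ≤ W x) (huv : u x ^ 2 ≤ v x ^ 2) :
    nehariDensity D f V v x - nehariDensity D f V u x ≤
      nehariDensity D f W v x - nehariDensity D f W u x := by
  simp only [nehariDensity, schrodingerDensity]
  nlinarith [mul_nonneg (sub_nonneg.2 hVW) (sub_nonneg.2 huv)]

theorem tendsto_nehariDensity {ι : Type*} {l : Filter ι} (D : Finset X) {f : ℝ → ℝ}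
    (hf : Continuous f) {V u : ι → X → ℝ} {W v : X → ℝ}
    (hV : ∀ x, Tendsto (fun i => V i x) l (𝓝 (W x)))
    (hu : ∀ x, Tendsto (fun i => u i x) l (𝓝 (v x))) (x : X) :
    Tendsto (fun i => nehariDensity D f (V i) (u i) x) l (𝓝 (nehariDensity D f W v x)) :=
  ((tendsto_finsetSum D fun d _ => ((hu (x + d)).sub (hu x)).pow 2).const_mul (1 / 2)
    |>.add ((hV x).mul ((hu x).pow 2))).sub (((hf.tendsto _).comp (hu x)).mul (hu x))

namespace NehariNonlinearity

variable {f F : ℝ → ℝ} (h : NehariNonlinearity f F)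
include h

theorem hasSum_nehariDensity (D : Finset X) (V : lp (fun _ : X => ℝ) ∞) (u : H1 X) :
    HasSum (nehariDensity D f V u) (nehariFunctional f (schrodinger D V) u) :=
  (hasSum_schrodingerDensity D V u).sub (h.hasSum_apply_mul u).summable.hasSum

variable {D : Finset X} {V : lp (fun _ : X => ℝ) ∞}

open scoped Pointwise in
theorem nehariFunctional_sub_truncate [DecidableEq X] (A : Finset X) (y : X) (u : H1 X) :
    nehariFunctional f (schrodinger D V) u -
        nehariFunctional f (schrodinger D V) (truncate (A.map (Equiv.addLeft y).toEmbedding) u) =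
      ∑ x ∈ A ∪ (A - D),
        (nehariDensity D f (fun x => V (y + x)) (fun x => u (y + x)) x -
          nehariDensity D f (fun x => V (y + x))
            (fun x => if x ∈ A then 0 else u (y + x)) x) := by
  have htrunc (x : X) : truncate (A.map (Equiv.addLeft y).toEmbedding) u (y + x) =
      if x ∈ A then 0 else u (y + x) := by
    simp [truncate_apply]
  have hsum (v : H1 X) := (Equiv.addLeft y).hasSum_iff.2 (h.hasSum_nehariDensity D V v)
  rw [sub_eq_sum_sub_of_hasSum (hsum u) (hsum _) (B := A ∪ (A - D)) ?_]
  · simp only [Function.comp_apply, Equiv.coe_addLeft, nehariDensity_add_left, htrunc]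
  · intro x hx
    rw [Finset.mem_union, not_or] at hx
    have hxd (d : X) (hd : d ∈ D) : x + d ∉ A := fun hA =>
      hx.2 (Finset.mem_sub.2 ⟨_, hA, d, hd, add_sub_cancel_right x d⟩)
    simp only [Function.comp_apply, Equiv.coe_addLeft, nehariDensity_add_left, htrunc]
    simp +contextual [nehariDensity, schrodingerDensity, hx.1, hxd]

theorem gapFunctional_sub_truncate [DecidableEq X] (A : Finset X) (y : X) (u : H1 X) :
    gapFunctional f F u - gapFunctional f F (truncate (A.map (Equiv.addLeft y).toEmbedding) u) =
      ∑ x ∈ A, quadraticGap f F (u (y + x)) := by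
  rw [sub_eq_sum_sub_of_hasSum (h.hasSum_quadraticGap u) (h.hasSum_quadraticGap _)
    (B := A.map (Equiv.addLeft y).toEmbedding) fun x hx => by rw [truncate_apply, if_neg hx]]
  simp +contextual [truncate_apply, h.quadraticGap_zero]

theorem continuous_quadraticGap : Continuous (quadraticGap f F) :=
  ((h.continuous.mul continuous_id).div_const 2).sub
    (continuous_iff_continuousAt.2 fun t => (h.hasDerivAt_primitive t).continuousAt)

section Limit

variable {ι : Type*} {l : Filter ι} [l.NeBot] {u : ι → H1 X} {y : ι → X} {v : H1 X}
  (hu : ∀ x, Tendsto (fun i => u i (y i + x)) l (𝓝 (v x)))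
include hu

variable {w : X → ℝ} (hVw : ∀ x, V x ≤ w x)
  (hV : ∀ x, Tendsto (fun i => V (y i + x)) l (𝓝 (w x)))

include hVw hV in
omit [l.NeBot] in
open scoped Pointwise in
theorem eventually_nehariFunctional_truncate_lt [DecidableEq X] {A : Finset X}
    (hA : nehariFunctional f (schrodinger D V) (truncate A v) <
      nehariFunctional f (schrodinger D V) v) :
    ∀ᶠ i in l, nehariFunctional f (schrodinger D V)
        (truncate (A.map (Equiv.addLeft (y i)).toEmbedding) (u i)) <
      nehariFunctional f (schrodinger D V) (u i) := by
  let v' : X → ℝ := fun x => if x ∈ A then 0 else v x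
  have hsq (x : X) : v' x ^ 2 ≤ v x ^ 2 := by
    by_cases hx : x ∈ A <;> simp [v', hx, sq_nonneg]
  have hlim : 0 < ∑ x ∈ A ∪ (A - D), (nehariDensity D f w v x - nehariDensity D f w v' x) := by
    refine (sub_pos.2 hA).trans_le ?_
    have hA0 : A.map (Equiv.addLeft (0 : X)).toEmbedding = A := by simp [Finset.map_eq_image]
    have hsub := h.nehariFunctional_sub_truncate (D := D) (V := V) A 0 v
    simp only [hA0, zero_add] at hsub
    exact hsub.trans_le (Finset.sum_le_sum fun x _ => nehariDensity_sub_le (hVw x) (hsq x))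
  have hu' (x : X) : Tendsto (fun i => if x ∈ A then 0 else u i (y i + x)) l (𝓝 (v' x)) := by
    by_cases hx : x ∈ A
    · simpa [v', hx] using tendsto_const_nhds
    · simpa [v', hx] using hu x
  have hdiff := tendsto_finsetSum (A ∪ (A - D)) fun x _ =>
    (tendsto_nehariDensity D h.continuous hV hu x).sub
      (tendsto_nehariDensity D h.continuous hV hu' x)
  filter_upwards [hdiff.eventually_const_lt hlim] with i hi
  rwa [← h.nehariFunctional_sub_truncate, sub_pos] at hi

variable {c : ℝ} (hc : Tendsto (fun i => gapFunctional f F (u i)) l (𝓝 c))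
include hc

theorem gapFunctional_le_of_tendsto : gapFunctional f F v ≤ c := by
  refine hasSum_le_of_sum_le (h.hasSum_quadraticGap v) fun A => ?_
  refine le_of_tendsto_of_tendsto' (tendsto_finsetSum A fun x _ =>
    (h.continuous_quadraticGap.tendsto _).comp (hu x)) hc fun i => ?_
  have hsum : HasSum (fun x => quadraticGap f F (u i (y i + x))) (gapFunctional f F (u i)) :=
    ((Equiv.addLeft (y i)).hasSum_iff (f := fun x => quadraticGap f F (u i x))).2
      (h.hasSum_quadraticGap (u i))
  exact sum_le_hasSum A (fun x _ => h.quadraticGap_nonneg _) hsum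

include hVw hV in
/- Were the Nehari functional positive at the profile `v`, cutting a large part of `v` out of `u i`
would leave a competitor with negative Nehari functional and strictly smaller gap. -/
theorem nehariFunctional_nonpos_of_tendsto (hv : v ≠ 0)
    (hI : ∀ i, nehariFunctional f (schrodinger D V) (u i) ≤ 0)
    (hmin : ∀ z, z ≠ 0 → nehariFunctional f (schrodinger D V) z ≤ 0 → c ≤ gapFunctional f F z) :
    nehariFunctional f (schrodinger D V) v ≤ 0 := by
  classical
  by_contra! hpos
  have hI0 : nehariFunctional f (schrodinger D V) 0 = 0 := by simp [nehariFunctional]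
  obtain ⟨x₀, hx₀⟩ := H1.exists_apply_ne_zero hv
  obtain ⟨A, hA, hx₀A⟩ : ∃ A : Finset X, nehariFunctional f (schrodinger D V) (truncate A v) <
      nehariFunctional f (schrodinger D V) v ∧ x₀ ∈ A := by
    have hlim := (h.continuous_nehariFunctional (schrodinger D V)).tendsto 0 |>.comp
      (tendsto_truncate v)
    rw [hI0] at hlim
    exact ((hlim.eventually_lt_const hpos).and (eventually_ge_atTop {x₀} |>.mono fun A hA =>
      Finset.singleton_subset_iff.1 hA)).exists
  have hcut := h.eventually_nehariFunctional_truncate_lt hu hVw hV hA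
  have hgap : ∀ᶠ i in l,
      c ≤ gapFunctional f F (u i) - ∑ x ∈ A, quadraticGap f F (u i (y i + x)) := by
    filter_upwards [hcut] with i hi
    have hneg := hi.trans_le (hI i)
    rw [← h.gapFunctional_sub_truncate A (y i) (u i), sub_sub_cancel]
    exact hmin _ (fun h0 => hneg.ne (by rw [h0, hI0])) hneg.le
  have hlim := ge_of_tendsto (hc.sub (tendsto_finsetSum A fun x _ =>
    (h.continuous_quadraticGap.tendsto _).comp (hu x))) hgap
  have hle := Finset.single_le_sum (fun x _ => h.quadraticGap_nonneg (v x)) hx₀A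
  linarith [h.quadraticGap_pos hx₀]

end Limit

variable {V₀ Vinf : ℝ} (hV₀ : 0 < V₀) (hVlb : ∀ x, V₀ ≤ V x) (hVub : ∀ x, V x ≤ Vinf)
  (hVlim : Tendsto V cofinite (𝓝 Vinf))
include hV₀ hVlb hVub hVlim

theorem exists_nehari_profile {u : ℕ → H1 X} {c : ℝ} (hu : ∀ n, u n ≠ 0)
    (hI : ∀ n, nehariFunctional f (schrodinger D V) (u n) = 0)
    (hc : Tendsto (fun n => gapFunctional f F (u n)) atTop (𝓝 c))
    (hmin : ∀ z, z ≠ 0 → nehariFunctional f (schrodinger D V) z ≤ 0 → c ≤ gapFunctional f F z) :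
    ∃ v : H1 X, v ≠ 0 ∧ nehariFunctional f (schrodinger D V) v ≤ 0 ∧ gapFunctional f F v ≤ c := by
  have hL := mul_norm_sq_le_inner_schrodinger (D := D) hVlb
  obtain ⟨K, hK⟩ := hc.bddAbove_range
  obtain ⟨R, hR⟩ := h.exists_norm_le hV₀ hL K
  have huR (n : ℕ) : ‖u n‖ ≤ R := by
    refine hR _ (hu n) (hI n) ?_
    rw [h.energyFunctional_eq, hI, zero_div, zero_add]
    exact hK (mem_range_self n)
  obtain ⟨δ, hδ, hpeak⟩ := h.exists_le_abs_apply hV₀ hL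
  choose z hz using fun n => hpeak _ (hu n) (hI n).le
  let l := hyperfilter ℕ
  obtain ⟨y, x₀, w, hyz, hVw, hVlim⟩ := exists_tendsto_translate l hVub hVlim z
  obtain ⟨v, hv⟩ := exists_tendsto_apply_of_norm_le l
    (u := fun n => reindex (Equiv.addLeft (y n)) (u n)) (R := R) (by simpa using huR)
  have hv0 : v ≠ 0 := by
    rintro rfl
    refine hδ.not_ge ((ge_of_tendsto (hv x₀).abs ?_).trans_eq abs_zero)
    filter_upwards [hyz] with n hn
    simpa [hn] using hz n
  have hcl := hc.mono_left Nat.hyperfilter_le_atTop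
  exact ⟨v, hv0,
    h.nehariFunctional_nonpos_of_tendsto hv hVw hVlim hcl hv0 (fun n => (hI n).le) hmin,
    h.gapFunctional_le_of_tendsto hv hcl⟩

theorem exists_nehari_minimizer :
    ∃ u : H1 X, u ≠ 0 ∧ nehariFunctional f (schrodinger D V) u = 0 ∧
      ∀ v, v ≠ 0 → nehariFunctional f (schrodinger D V) v = 0 →
        gapFunctional f F u ≤ gapFunctional f F v := by
  have hL := mul_norm_sq_le_inner_schrodinger (D := D) hVlb
  set L := schrodinger D V
  let S : Set ℝ := gapFunctional f F '' {u | u ≠ 0 ∧ nehariFunctional f L u = 0}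
  have hS : S.Nonempty := Set.Nonempty.image _ (h.exists_nehariFunctional_eq_zero hV₀ hL)
  have hSbdd : BddBelow S := ⟨0, forall_mem_image.2 fun u _ => h.gapFunctional_nonneg u⟩
  have hmin (v : H1 X) (hv : v ≠ 0) (hI : nehariFunctional f L v ≤ 0) :
      sInf S ≤ gapFunctional f F v := by
    obtain ⟨t, ht, hIt, hle⟩ := h.exists_smul_nehariFunctional_eq_zero hV₀ hL hv hI
    exact (csInf_le hSbdd (mem_image_of_mem _ ⟨ht, hIt⟩)).trans hle
  obtain ⟨c, -, hc, hcS⟩ := exists_seq_tendsto_sInf hS hSbdd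
  choose u hu hcu using hcS
  obtain rfl : (fun n => gapFunctional f F (u n)) = c := funext hcu
  obtain ⟨v, hv, hIv, hgap⟩ := h.exists_nehari_profile hV₀ hVlb hVub hVlim (fun n => (hu n).1)
    (fun n => (hu n).2) hc hmin
  obtain ⟨t, ht, hIt, hle⟩ := h.exists_smul_nehariFunctional_eq_zero hV₀ hL hv hIv
  exact ⟨t • v, ht, hIt, fun q hq hIq => hle.trans (hgap.trans (hmin q hq hIq.le))⟩

end NehariNonlinearity

end Concentration

section CayleyGraph

variable {X : Type*} [AddGroup X] {D : Finset X} {adj : X → X → Prop}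
  (hadj : ∀ x y, adj x y ↔ -x + y ∈ D)
include hadj

theorem gradSq_add_eq_schrodingerDensity (V u : X → ℝ) (x : X) :
    gradSq adj u x + V x * u x ^ 2 = schrodingerDensity D V u x := by
  let e : D ≃ {y // adj x y} := (Equiv.addLeft x).subtypeEquiv fun d => by simp [hadj]
  rw [gradSq, gammaProd, schrodingerDensity, ← e.tsum_eq, tsum_fintype,
    ← Finset.sum_coe_sort D fun d => (u (x + d) - u x) ^ 2]
  simp [e, sq]

theorem PhiF_eq_energyFunctional (V : lp (fun _ : X => ℝ) ∞) (F : ℝ → ℝ) :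
    PhiF adj V (fun _ => F) = energyFunctional F (schrodinger D V) := by
  funext u
  simp only [PhiF, energyFunctional, gradSq_add_eq_schrodingerDensity hadj]
  rw [(hasSum_schrodingerDensity D V u).tsum_eq]

theorem Nehari_eq_setOf {f F : ℝ → ℝ} (h : NehariNonlinearity f F) (V : lp (fun _ : X => ℝ) ∞) :
    Nehari adj V (fun _ => F) = {u | u ≠ 0 ∧ nehariFunctional f (schrodinger D V) u = 0} := by
  simp only [Nehari, PhiF_eq_energyFunctional hadj,
    h.fderiv_energyFunctional_apply_self (isSelfAdjoint_schrodinger D V)]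

theorem stmt1_general {f F : ℝ → ℝ} (h : NehariNonlinearity f F) {V : X → ℝ} {V₀ Vinf : ℝ}
    (hV₀ : 0 < V₀) (hVlb : ∀ x, V₀ ≤ V x) (hVub : ∀ x, V x ≤ Vinf)
    (hVlim : Tendsto V cofinite (𝓝 Vinf)) :
    ∃ u : H1 X, u ≠ 0 ∧ fderiv ℝ (PhiF adj V fun _ => F) u = 0 ∧
      PhiF adj V (fun _ => F) u = sInf (PhiF adj V (fun _ => F) '' Nehari adj V fun _ => F) := by
  have hVnorm (x : X) : ‖V x‖ ≤ Vinf :=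
    (Real.norm_of_nonneg (hV₀.le.trans (hVlb x))).trans_le (hVub x)
  obtain ⟨V, rfl⟩ : ∃ V' : lp (fun _ : X => ℝ) ∞, ⇑V' = V :=
    ⟨⟨V, memℓp_infty ⟨Vinf, forall_mem_range.2 hVnorm⟩⟩, rfl⟩
  rw [Nehari_eq_setOf hadj h, PhiF_eq_energyFunctional hadj]
  have hL := isSelfAdjoint_schrodinger D V
  obtain ⟨u, hu, hI, hgap⟩ := h.exists_nehari_minimizer (D := D) hV₀ hVlb hVub hVlim
  have hmin (v : H1 X) (hv : v ≠ 0) (hIv : nehariFunctional f (schrodinger D V) v = 0) :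
      energyFunctional F (schrodinger D V) u ≤ energyFunctional F (schrodinger D V) v := by
    rw [h.energyFunctional_eq, h.energyFunctional_eq, hI, hIv]
    gcongr
    exact hgap v hv hIv
  have hleast : IsLeast (energyFunctional F (schrodinger D V) ''
      {v | v ≠ 0 ∧ nehariFunctional f (schrodinger D V) v = 0})
      (energyFunctional F (schrodinger D V) u) :=
    ⟨mem_image_of_mem _ ⟨hu, hI⟩, forall_mem_image.2 fun v hv => hmin v hv.1 hv.2⟩
  refine ⟨u, hu, ?_, hleast.csInf_eq.symm⟩
  rw [(h.hasFDerivAt_energyFunctional hL u).fderiv,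
    h.map_eq_nemytskii_of_minimizer hL hu hI hmin, sub_self, map_zero]

end CayleyGraph

theorem finite_setOf_sum_natAbs_eq (N n : ℕ) : {d : Fin N → ℤ | ∑ i, (d i).natAbs = n}.Finite := by
  refine (finite_Icc (fun _ => -(n : ℤ)) fun _ => (n : ℤ)).subset fun d hd => ?_
  have hdn (i : Fin N) : (d i).natAbs ≤ n :=
    (Finset.single_le_sum (fun _ _ => zero_le) (Finset.mem_univ i)).trans_eq hd
  exact ⟨fun i => by grind, fun i => by grind⟩

/-- The steps `±e_i` of the lattice graph `ℤ^N`. -/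
noncomputable def latticeSteps (N : ℕ) : Finset (Fin N → ℤ) :=
  (finite_setOf_sum_natAbs_eq N 1).toFinset

theorem adjZ_iff {N : ℕ} (x y : Fin N → ℤ) : adjZ N x y ↔ -x + y ∈ latticeSteps N := by
  have hsymm (i : Fin N) : (x i - y i).natAbs = ((y - x) i).natAbs := by
    rw [Pi.sub_apply, ← neg_sub, Int.natAbs_neg]
  simp only [latticeSteps, Finite.mem_toFinset, neg_add_eq_sub, mem_ofPred_eq, adjZ, hsymm]

/-- Theorem 1.2: existence of a ground state for `−Δu + V(x)u = f(u)` on `ℤ^N`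
with a bounded potential well `V`. -/
theorem stmt1 (N : ℕ) (hN : 1 ≤ N)
    (f : ℝ → ℝ) (hcont : Continuous f)
    (a q : ℝ) (ha : 0 < a) (hq : 2 < q)
    (hgrowth : ∀ t, |f t| ≤ a * (|t| + |t| ^ (q - 1)))
    (hsmall : ∀ ε > 0, ∃ δ > 0, ∀ t : ℝ, t ≠ 0 → |t| < δ → |f t| ≤ ε * |t|)
    (hmono : StrictMonoOn (fun t => f t / |t|) (Set.Iio 0) ∧
             StrictMonoOn (fun t => f t / |t|) (Set.Ioi 0))
    (F : ℝ → ℝ) (hF : ∀ t, F t = ∫ s in (0:ℝ)..t, f s)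
    (hsuper : ∀ M : ℝ, ∃ R > 0, ∀ t : ℝ, R ≤ |t| → M ≤ F t / t ^ 2)
    (Vp : (Fin N → ℤ) → ℝ) (V0 Vinf : ℝ) (hV0 : 0 < V0)
    (hVlb : ∀ x, V0 ≤ Vp x)
    (hVlub : IsLUB (Set.range Vp) Vinf)
    (hVlim : Filter.Tendsto Vp Filter.cofinite (nhds Vinf)) :
    ∃ u : H1 (Fin N → ℤ), u ≠ 0 ∧
      fderiv ℝ (PhiF (adjZ N) Vp (fun _ => F)) u = 0 ∧
      PhiF (adjZ N) Vp (fun _ => F) u =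
        sInf (PhiF (adjZ N) Vp (fun _ => F) '' Nehari (adjZ N) Vp (fun _ => F)) := by
  exact stmt1_general adjZ_iff ⟨hcont, hsmall, hmono.1, hmono.2, hF, hsuper⟩ hV0 hVlb
    (fun x => hVlub.1 ⟨x, rfl⟩) hVlim
end

section
/- In the Nehari setting, let I(u) = Σ_x F(x,u(x)) on H¹(V), which is Fréchet differentiable with I'(u)w = Σ_x f(x,u(x))w(x). Then I'(u) = o(‖u‖) as u → 0: the operator norm of I'(u) divided by ‖u‖ tends to 0 as ‖u‖ → 0. -/
open scoped ENNReal

/-!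
Write `N_f u = (x ↦ f(x, u(x)))`. By (g) and (f1), `|f(x, t)| ≤ c |t|` on bounded sets of `t`, so
`N_f` maps `ℓ²` to itself, and
`|f(x, v(x)) - f(x, u(x))| ≤ c |v(x) - u(x)| + 2c |u(x)|` makes it continuous by dominated
convergence. For `u, v ∈ ℓ²` the mean value theorem at every vertex yields `ξ ∈ ℓ²` with
`‖ξ - u‖ ≤ ‖v - u‖` and `I(v) - I(u) = ⟪N_f ξ, v - u⟫`, so the continuity of `N_f` says precisely
that `N_f u` is the gradient of `I` at `u`. Finally (f1) gives `‖N_f u‖ = o(‖u‖)` in `ℓ²`, and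
`√C₁` times the `ℓ²` norm is dominated by the `V`-norm.
-/

open Filter Topology

open scoped InnerProductSpace NNReal

section DominatedConvergence

variable {α ι : Type*} {l : Filter α} {p : ℝ≥0∞} [Fact (1 ≤ p)]
  {E G : ι → Type*} [∀ i, NormedAddCommGroup (E i)] [∀ i, NormedAddCommGroup (G i)]

theorem tendsto_lp_zero_of_dominated (hp : p ≠ ∞) {w : α → lp E p} {b : lp (fun _ : ι => ℝ) p}
    (hbound : ∀ n i, ‖w n i‖ ≤ b i) (hlim : ∀ i, Tendsto (fun n => w n i) l (𝓝 0)) :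
    Tendsto w l (𝓝 0) := by
  have hp_pos : 0 < p.toReal := ENNReal.toReal_pos (zero_lt_one.trans_le Fact.out).ne' hp
  have hpow : Tendsto (fun t : ℝ => t ^ p.toReal) (𝓝 0) (𝓝 0) := by
    simpa only [Real.zero_rpow hp_pos.ne'] using
      (Real.continuousAt_rpow_const 0 p.toReal (Or.inr hp_pos.le)).tendsto
  have hsum : Tendsto (fun n => ∑' i, ‖w n i‖ ^ p.toReal) l (𝓝 0) := by
    rw [← tsum_zero (α := ℝ) (β := ι)]
    refine tendsto_tsum_of_dominated_convergence ((lp.memℓp b).summable hp_pos)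
      (fun i => hpow.comp (by simpa only [norm_zero] using (hlim i).norm))
      (Eventually.of_forall fun n i => ?_)
    rw [Real.norm_of_nonneg (by positivity)]
    exact Real.rpow_le_rpow (norm_nonneg _) ((hbound n i).trans (Real.le_norm_self _)) hp_pos.le
  rw [tendsto_zero_iff_norm_tendsto_zero]
  simp only [lp.norm_eq_tsum_rpow hp_pos]
  simpa only [Real.zero_rpow (one_div_pos.2 hp_pos).ne'] using
    hsum.rpow_const (p := 1 / p.toReal) (Or.inr (one_div_pos.2 hp_pos).le)

theorem tendsto_lp_zero_of_norm_le_add (hp : p ≠ ∞) {w : α → lp E p}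
    {a : α → lp G p} {b : lp (fun _ : ι => ℝ) p} (ha : Tendsto a l (𝓝 0)) (hb : ∀ i, 0 ≤ b i)
    (hle : ∀ᶠ n in l, ∀ i, ‖w n i‖ ≤ ‖a n i‖ + b i)
    (hlim : ∀ i, Tendsto (fun n => w n i) l (𝓝 0)) :
    Tendsto w l (𝓝 0) := by
  have hp0 : p ≠ 0 := (zero_lt_one.trans_le Fact.out).ne'
  have hmin_nonneg (n : α) (i : ι) : 0 ≤ min ‖w n i‖ (b i) := le_min (norm_nonneg _) (hb i)
  let m (n : α) : lp (fun _ : ι => ℝ) p :=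
    ⟨fun i => min ‖w n i‖ (b i), (lp.memℓp b).mono fun i =>
      (Real.norm_of_nonneg (hmin_nonneg n i)).trans_le (min_le_right _ _)⟩
  have hm : Tendsto m l (𝓝 0) := by
    refine tendsto_lp_zero_of_dominated hp (b := b)
      (fun n i => (Real.norm_of_nonneg (hmin_nonneg n i)).trans_le (min_le_right _ _)) fun i => ?_
    exact squeeze_zero (hmin_nonneg · i) (fun n => min_le_left _ _)
      (by simpa only [norm_zero] using (hlim i).norm)
  have hwm : ∀ᶠ n in l, ‖w n‖ ≤ ‖a n‖ + ‖m n‖ := by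
    filter_upwards [hle] with n hn
    have hpt (i : ι) : ‖w n i‖ ≤ ‖(lp.toNorm (a n) + m n) i‖ := by
      refine le_trans ?_ (Real.le_norm_self _)
      exact (le_min (le_add_of_nonneg_left (norm_nonneg _)) (hn i)).trans_eq
        (min_add_add_left _ _ _)
    calc ‖w n‖ ≤ ‖lp.toNorm (a n) + m n‖ := lp.norm_mono hp0 hpt
      _ ≤ ‖a n‖ + ‖m n‖ := by simpa only [lp.norm_toNorm] using norm_add_le (lp.toNorm (a n)) (m n)
  exact squeeze_zero_norm' hwm (by simpa only [add_zero, norm_zero] using ha.norm.add hm.norm)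

end DominatedConvergence

section Nemytskii

variable {ι : Type*} {E G : ι → Type*} [∀ i, NormedAddCommGroup (E i)]
  [∀ i, NormedAddCommGroup (G i)] {f : ∀ i, E i → G i}

/-- Linear growth on bounded sets, uniformly in the index: the condition under which composition
with `f` acts on `ℓ^p` spaces. -/
def UniformLinearGrowth (f : ∀ i, E i → G i) : Prop :=
  ∀ r : ℝ, ∃ c : ℝ≥0, ∀ i t, ‖t‖ ≤ r → ‖f i t‖ ≤ c * ‖t‖

/-- `f i t = o(t)` as `t → 0`, uniformly in the index: condition (f1), including `f i 0 = 0`. -/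
def UniformLittleO (f : ∀ i, E i → G i) : Prop :=
  ∀ ε > (0 : ℝ), ∃ δ > (0 : ℝ), ∀ i t, ‖t‖ < δ → ‖f i t‖ ≤ ε * ‖t‖

theorem UniformLittleO.uniformLinearGrowth (hf : UniformLittleO f)
    (hbdd : ∀ r : ℝ, ∃ C : ℝ, ∀ i t, ‖t‖ ≤ r → ‖f i t‖ ≤ C) : UniformLinearGrowth f := by
  intro r
  obtain ⟨δ, hδ, hsmall⟩ := hf 1 one_pos
  obtain ⟨C, hC⟩ := hbdd r
  refine ⟨max 1 (C / δ).toNNReal, fun i t ht => ?_⟩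
  rw [NNReal.coe_max, NNReal.coe_one, Real.coe_toNNReal']
  rcases lt_or_ge ‖t‖ δ with htδ | hδt
  · exact (hsmall i t htδ).trans (by gcongr; exact le_max_left _ _)
  · calc ‖f i t‖ ≤ C := hC i t ht
      _ = C / δ * δ := (div_mul_cancel₀ C hδ.ne').symm
      _ ≤ max 1 (max (C / δ) 0) * ‖t‖ := by
        gcongr
        exact (le_max_left _ _).trans (le_max_right _ _)

namespace UniformLinearGrowth

variable {p : ℝ≥0∞} [Fact (1 ≤ p)]

theorem memℓp_comp (hf : UniformLinearGrowth f) (u : lp E p) : Memℓp (fun i => f i (u i)) p := by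
  obtain ⟨c, hc⟩ := hf ‖u‖
  have hp0 : p ≠ 0 := (zero_lt_one.trans_le Fact.out).ne'
  exact ((lp.memℓp u).norm.const_mul (c : ℝ)).mono fun i => hc i _ (lp.norm_apply_le_norm hp0 u i)

/-- The Nemytskii (superposition) operator `u ↦ (i ↦ f i (u i))` on `ℓ^p`. -/
def nemytskii (hf : UniformLinearGrowth f) (u : lp E p) : lp G p :=
  ⟨fun i => f i (u i), hf.memℓp_comp u⟩

theorem nemytskii_apply (hf : UniformLinearGrowth f) (u : lp E p) (i : ι) :
    hf.nemytskii u i = f i (u i) :=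
  rfl

theorem continuous_nemytskii (hp : p ≠ ∞) (hf : UniformLinearGrowth f)
    (hcont : ∀ i, Continuous (f i)) : Continuous (hf.nemytskii : lp E p → lp G p) := by
  have hp0 : p ≠ 0 := (zero_lt_one.trans_le Fact.out).ne'
  refine continuous_iff_continuousAt.2 fun u => ?_
  rw [ContinuousAt, ← tendsto_sub_nhds_zero_iff]
  obtain ⟨c, hc⟩ := hf (‖u‖ + 1)
  have hdist : Tendsto (fun v : lp E p => (c : ℝ) • lp.toNorm (v - u)) (𝓝 u) (𝓝 0) := by
    have hnorm : Tendsto (fun v => c * ‖v - u‖) (𝓝 u) (𝓝 0) := by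
      simpa only [mul_zero] using (tendsto_norm_sub_self u).const_mul (c : ℝ)
    exact squeeze_zero_norm (fun v => by
      rw [norm_smul, lp.norm_toNorm, NNReal.norm_eq]) hnorm
  have hball : ∀ᶠ v : lp E p in 𝓝 u, ‖v‖ ≤ ‖u‖ + 1 :=
    continuous_norm.continuousAt.eventually_le_const (lt_add_one ‖u‖)
  refine tendsto_lp_zero_of_norm_le_add hp hdist (b := (2 * c : ℝ) • lp.toNorm u)
    (fun i => by simp only [lp.coeFn_smul, Pi.smul_apply, lp.toNorm_coe, smul_eq_mul]; positivity)
    ?_ fun i => ?_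
  · filter_upwards [hball] with v hv i
    have hui : ‖u i‖ ≤ ‖u‖ + 1 := (lp.norm_apply_le_norm hp0 u i).trans (lt_add_one _).le
    have hvi : ‖v i‖ ≤ ‖u‖ + 1 := (lp.norm_apply_le_norm hp0 v i).trans hv
    calc ‖f i (v i) - f i (u i)‖ ≤ c * ‖v i‖ + c * ‖u i‖ :=
          norm_sub_le_of_le (hc i _ hvi) (hc i _ hui)
      _ ≤ c * (‖v i - u i‖ + ‖u i‖) + c * ‖u i‖ := by gcongr; exact norm_le_norm_sub_add _ _
      _ = c * ‖v i - u i‖ + 2 * c * ‖u i‖ := by ring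
      _ = ‖((c : ℝ) • lp.toNorm (v - u)) i‖ + ((2 * c : ℝ) • lp.toNorm u) i := by simp
  · exact tendsto_sub_nhds_zero_iff.2
      (((hcont i).tendsto _).comp
        ((continuous_apply i).tendsto _ |>.comp (lp.uniformContinuous_coe.continuous.tendsto u)))

theorem isLittleO_nemytskii (hf : UniformLinearGrowth f) (hf₀ : UniformLittleO f) :
    (hf.nemytskii : lp E p → lp G p) =o[𝓝 0] fun u => u := by
  have hp0 : p ≠ 0 := (zero_lt_one.trans_le Fact.out).ne'
  refine Asymptotics.isLittleO_iff.2 fun ε hε => ?_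
  obtain ⟨δ, hδ, hsmall⟩ := hf₀ ε hε
  filter_upwards [Metric.ball_mem_nhds 0 hδ] with u hu
  rw [mem_ball_zero_iff] at hu
  calc ‖hf.nemytskii u‖ ≤ ‖ε • lp.toNorm u‖ := lp.norm_mono hp0 fun i =>
        (hsmall i _ ((lp.norm_apply_le_norm hp0 u i).trans_lt hu)).trans (Real.le_norm_self _)
    _ = ε * ‖u‖ := by rw [norm_smul, lp.norm_toNorm, Real.norm_of_nonneg hε.le]

end UniformLinearGrowth

end Nemytskii

section Gradient

variable {ι : Type*} {E : ι → Type*} [∀ i, NormedAddCommGroup (E i)]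
  [∀ i, InnerProductSpace ℝ (E i)] [∀ i, CompleteSpace (E i)]
  {f : ∀ i, E i → E i} {F : ∀ i, E i → ℝ}

theorem exists_lp_mean_value {p : ℝ≥0∞} (hF : ∀ i t, HasGradientAt (F i) (f i t) t) (hp : p ≠ 0)
    (u v : lp E p) : ∃ ξ : lp E p, ‖ξ - u‖ ≤ ‖v - u‖ ∧
      ∀ i, F i (v i) - F i (u i) = ⟪f i (ξ i), v i - u i⟫_ℝ := by
  have hmvt (i : ι) : ∃ z ∈ segment ℝ (u i) (v i), F i (v i) - F i (u i) = ⟪f i z, v i - u i⟫_ℝ :=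
    domain_mvt (fun t _ => (hF i t).hasFDerivAt.hasFDerivWithinAt) convex_univ
      (Set.mem_univ _) (Set.mem_univ _)
  choose z hz hFz using hmvt
  have hzu (i : ι) : ‖z i - u i‖ ≤ ‖v i - u i‖ := norm_sub_le_of_mem_segment (hz i)
  let d : lp E p := ⟨fun i => z i - u i, (lp.memℓp (v - u)).mono' hzu⟩
  refine ⟨u + d, ?_, fun i => ?_⟩
  · rw [add_sub_cancel_left]
    exact lp.norm_mono hp hzu
  · rw [lp.coeFn_add, Pi.add_apply, add_sub_cancel]
    exact hFz i

theorem UniformLinearGrowth.hasGradientAt_tsum (hf : UniformLinearGrowth f)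
    (hcont : ∀ i, Continuous (f i)) (hF : ∀ i t, HasGradientAt (F i) (f i t) t)
    (hF₀ : ∀ i, F i 0 = 0) (u : lp E 2) :
    HasGradientAt (fun v : lp E 2 => ∑' i, F i (v i)) (hf.nemytskii u) u := by
  have hsummable (v : lp E 2) : Summable fun i => F i (v i) := by
    obtain ⟨ξ, -, hξ⟩ := exists_lp_mean_value hF two_ne_zero 0 v
    refine (lp.summable_inner (𝕜 := ℝ) (hf.nemytskii ξ) v).congr fun i => ?_
    simpa [hF₀, hf.nemytskii_apply] using (hξ i).symm
  refine hasGradientAt_iff_isLittleO.2 (Asymptotics.isLittleO_iff.2 fun ε hε => ?_)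
  obtain ⟨δ, hδ, hclose⟩ := Metric.continuousAt_iff.1
    (hf.continuous_nemytskii (p := 2) ENNReal.ofNat_ne_top hcont).continuousAt ε hε
  filter_upwards [Metric.ball_mem_nhds u hδ] with v hv
  obtain ⟨ξ, hξ, hFξ⟩ := exists_lp_mean_value hF two_ne_zero u v
  have hdiff : ∑' i, F i (v i) - ∑' i, F i (u i) = ⟪hf.nemytskii ξ, v - u⟫_ℝ := by
    rw [← (hsummable v).tsum_sub (hsummable u), lp.inner_eq_tsum]
    exact tsum_congr hFξ
  have hξu : ‖hf.nemytskii ξ - hf.nemytskii u‖ < ε := by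
    rw [← dist_eq_norm]
    exact hclose ((dist_eq_norm ξ u).trans_lt (hξ.trans_lt (mem_ball_iff_norm.1 hv)))
  calc ‖∑' i, F i (v i) - ∑' i, F i (u i) - ⟪hf.nemytskii u, v - u⟫_ℝ‖
      = ‖⟪hf.nemytskii ξ - hf.nemytskii u, v - u⟫_ℝ‖ := by rw [hdiff, inner_sub_left]
    _ ≤ ‖hf.nemytskii ξ - hf.nemytskii u‖ * ‖v - u‖ := norm_inner_le_norm _ _
    _ ≤ ε * ‖v - u‖ := by gcongr

end Gradient

section Asymptotics

theorem uniformLittleO_of_forall_ne_zero {ι : Type*} {E G : ι → Type*}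
    [∀ i, NormedAddCommGroup (E i)] [∀ i, (𝓝[≠] (0 : E i)).NeBot]
    [∀ i, NormedAddCommGroup (G i)] {f : ∀ i, E i → G i} (hcont : ∀ i, ContinuousAt (f i) 0)
    (hsmall : ∀ ε > (0 : ℝ), ∃ δ > (0 : ℝ), ∀ i t, t ≠ 0 → ‖t‖ < δ → ‖f i t‖ ≤ ε * ‖t‖) :
    UniformLittleO f := by
  intro ε hε
  obtain ⟨δ, hδ, hfδ⟩ := hsmall ε hε
  refine ⟨δ, hδ, fun i t ht => ?_⟩
  obtain rfl | ht0 := eq_or_ne t 0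
  · have hlim : Tendsto (fun s => ‖f i s‖) (𝓝[≠] 0) (𝓝 ‖f i 0‖) :=
      (hcont i).norm.mono_left nhdsWithin_le_nhds
    have hlim_mul : Tendsto (fun s : E i => ε * ‖s‖) (𝓝[≠] 0) (𝓝 (ε * ‖(0 : E i)‖)) :=
      (continuous_const.mul continuous_norm).continuousAt.mono_left nhdsWithin_le_nhds
    refine le_of_tendsto_of_tendsto hlim hlim_mul ?_
    filter_upwards [self_mem_nhdsWithin, mem_nhdsWithin_of_mem_nhds (Metric.ball_mem_nhds 0 hδ)]
      with s hs0 hsδ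
    exact hfδ i s hs0 (mem_ball_zero_iff.1 hsδ)
  · exact hfδ i t ht0 ht

theorem exists_bound_of_growth {ι : Type*} {f : ι → ℝ → ℝ} {a q : ℝ} (ha : 0 ≤ a) (hq : 1 ≤ q)
    (hgrowth : ∀ i t, |f i t| ≤ a * (|t| + |t| ^ (q - 1))) (r : ℝ) :
    ∃ C : ℝ, ∀ i t, |t| ≤ r → |f i t| ≤ C := by
  refine ⟨a * (r + r ^ (q - 1)), fun i t ht => (hgrowth i t).trans ?_⟩
  have hpow : |t| ^ (q - 1) ≤ r ^ (q - 1) :=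
    Real.rpow_le_rpow (abs_nonneg t) ht (sub_nonneg.2 hq)
  gcongr

theorem exists_abs_inner_le_of_isLittleO {E : Type*} [NormedAddCommGroup E]
    [InnerProductSpace ℝ E] {A : E → E} (hA : A =o[𝓝 0] fun u => u) {N : E → ℝ} {κ : ℝ}
    (hκ : 0 < κ) (hN : ∀ u, κ * ‖u‖ ≤ N u) {ε : ℝ} (hε : 0 < ε) :
    ∃ δ > 0, ∀ u w, N u < δ → |⟪A u, w⟫_ℝ| ≤ ε * N u * N w := by
  obtain ⟨δ, hδ, hAδ⟩ := Metric.eventually_nhds_iff.1 (hA.def (c := ε * κ ^ 2) (by positivity))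
  refine ⟨κ * δ, by positivity, fun u w hu => ?_⟩
  have huδ : ‖u‖ < δ := lt_of_mul_lt_mul_left ((hN u).trans_lt hu) hκ.le
  have hNu : 0 ≤ N u := le_trans (by positivity) (hN u)
  calc |⟪A u, w⟫_ℝ| ≤ ‖A u‖ * ‖w‖ := abs_real_inner_le_norm _ _
    _ ≤ ε * κ ^ 2 * ‖u‖ * ‖w‖ := by
      gcongr
      exact hAδ (by rwa [dist_zero_right])
    _ = ε * (κ * ‖u‖) * (κ * ‖w‖) := by ring
    _ ≤ ε * N u * N w := by gcongr <;> apply hN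

end Asymptotics

section VNorm

variable {ι : Type*} {adj : ι → ι → Prop}

theorem hasSum_sq_lp (u : lp (fun _ : ι => ℝ) 2) : HasSum (fun x => u x ^ 2) (‖u‖ ^ 2) := by
  simpa only [ENNReal.toReal_ofNat, Real.rpow_ofNat, Real.norm_eq_abs, sq_abs] using
    lp.hasSum_norm (p := 2) (by norm_num) u

theorem gradSq_nonneg (u : ι → ℝ) (x : ι) : 0 ≤ gradSq adj u x :=
  mul_nonneg (by norm_num) (tsum_nonneg fun _ => mul_self_nonneg _)

theorem summable_sigma_adj_of_ncard_le {D : ℕ} (hfin : ∀ x, {y | adj x y}.Finite)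
    (hdeg : ∀ x, {y | adj x y}.ncard ≤ D) {g : ι → ℝ} (hg₀ : ∀ x, 0 ≤ g x) (hg : Summable g) :
    Summable fun e : Σ x, {y // adj x y} => g e.1 := by
  have hfinite (x : ι) : Finite {y // adj x y} := (hfin x).to_subtype
  refine (summable_sigma_of_nonneg fun e => hg₀ e.1).2 ⟨fun x => .of_finite, ?_⟩
  refine .of_nonneg_of_le (fun x => tsum_nonneg fun _ => hg₀ x) (fun x => ?_)
    (hg.mul_left (D : ℝ))
  calc ∑' _ : {y // adj x y}, g x = Nat.card {y // adj x y} * g x := by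
        rw [tsum_const, nsmul_eq_mul]
    _ ≤ D * g x := mul_le_mul_of_nonneg_right (Nat.cast_le.2 (hdeg x)) (hg₀ x)

theorem summable_gradSq {D : ℕ} (hsym : ∀ x y, adj x y → adj y x)
    (hfin : ∀ x, {y | adj x y}.Finite) (hdeg : ∀ x, {y | adj x y}.ncard ≤ D) {u : ι → ℝ}
    (hu : Summable fun x => u x ^ 2) : Summable (gradSq adj u) := by
  have htail : Summable fun e : Σ x, {y // adj x y} => u e.1 ^ 2 :=
    summable_sigma_adj_of_ncard_le hfin hdeg (fun x => sq_nonneg (u x)) hu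
  let flip : (Σ x, {y // adj x y}) ≃ Σ x, {y // adj x y} :=
    { toFun := fun e => ⟨e.2.1, e.1, hsym _ _ e.2.2⟩
      invFun := fun e => ⟨e.2.1, e.1, hsym _ _ e.2.2⟩
      left_inv := fun _ => rfl
      right_inv := fun _ => rfl }
  have hhead : Summable fun e : Σ x, {y // adj x y} => u e.2.1 ^ 2 := flip.summable_iff.2 htail
  have hdiff : Summable fun e : Σ x, {y // adj x y} => (u e.2.1 - u e.1) * (u e.2.1 - u e.1) := by
    refine .of_nonneg_of_le (fun _ => mul_self_nonneg _) (fun e => ?_)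
      ((htail.add hhead).mul_left 2)
    linarith [sq_nonneg (u e.2.1 + u e.1)]
  have hsum := ((summable_sigma_of_nonneg fun _ => mul_self_nonneg _).1 hdiff).2
  unfold gradSq gammaProd
  exact hsum.mul_left (1 / 2)

theorem sqrt_mul_norm_le_nrmH {D : ℕ} (hsym : ∀ x y, adj x y → adj y x)
    (hfin : ∀ x, {y | adj x y}.Finite) (hdeg : ∀ x, {y | adj x y}.ncard ≤ D)
    {Vp : ι → ℝ} {C₁ C₂ : ℝ} (hC₁ : 0 ≤ C₁) (hV : ∀ x, C₁ ≤ Vp x ∧ Vp x ≤ C₂) (u : H1 ι) :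
    √C₁ * ‖u‖ ≤ nrmH adj Vp u := by
  have hsq := hasSum_sq_lp u
  have hpot : Summable fun x => Vp x * u x ^ 2 :=
    .of_nonneg_of_le (fun x => mul_nonneg (hC₁.trans (hV x).1) (sq_nonneg _))
      (fun x => mul_le_mul_of_nonneg_right (hV x).2 (sq_nonneg _)) (hsq.summable.mul_left C₂)
  refine Real.le_sqrt_of_sq_le ?_
  rw [mul_pow, Real.sq_sqrt hC₁]
  refine hasSum_le (fun x => ?_) (hsq.mul_left C₁)
    ((summable_gradSq hsym hfin hdeg hsq.summable).add hpot).hasSum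
  calc C₁ * u x ^ 2 ≤ Vp x * u x ^ 2 := by gcongr; exact (hV x).1
    _ ≤ gradSq adj u x + Vp x * u x ^ 2 := le_add_of_nonneg_left (gradSq_nonneg _ _)

end VNorm

theorem UniformLinearGrowth.inner_nemytskii {ι : Type*} {f : ι → ℝ → ℝ}
    (hf : UniformLinearGrowth f) (u w : H1 ι) :
    ⟪hf.nemytskii u, w⟫_ℝ = ∑' x, f x (u x) * w x := by
  rw [lp.inner_eq_tsum]
  exact tsum_congr fun x => mul_comm _ _

theorem hasGradientAt_integral {g : ℝ → ℝ} (hg : Continuous g) (a t : ℝ) :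
    HasGradientAt (fun b => ∫ s in a..b, g s) (g t) t :=
  (hg.integral_hasStrictDerivAt a t).hasDerivAt.hasGradientAt'

theorem stmt5_general {Vtx : Type*} (adj : Vtx → Vtx → Prop) (D : ℕ)
    (hsym : ∀ x y, adj x y → adj y x)
    (hfin : ∀ x, {y | adj x y}.Finite)
    (hdeg : ∀ x, {y | adj x y}.ncard ≤ D)
    (Vp : Vtx → ℝ) (C1 C2 : ℝ) (hC1 : 0 < C1)
    (hVbd : ∀ x, C1 ≤ Vp x ∧ Vp x ≤ C2)
    (f : Vtx → ℝ → ℝ) (hcont : ∀ x, Continuous (f x))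
    (hbdd : ∀ r : ℝ, ∃ C : ℝ, ∀ x t, |t| ≤ r → |f x t| ≤ C)
    (hsmall : ∀ ε > 0, ∃ δ > 0, ∀ x t, t ≠ 0 → |t| < δ → |f x t| ≤ ε * |t|)
    (F : Vtx → ℝ → ℝ) (hF : ∀ x t, F x t = ∫ s in (0 : ℝ)..t, f x s) :
    (∀ u : H1 Vtx, DifferentiableAt ℝ (fun v : H1 Vtx => ∑' x, F x (v x)) u) ∧
    (∀ u w : H1 Vtx,
      fderiv ℝ (fun v : H1 Vtx => ∑' x, F x (v x)) u w = ∑' x, f x (u x) * w x) ∧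
    (∀ ε > 0, ∃ δ > 0, ∀ u w : H1 Vtx, nrmH adj Vp u < δ →
      |∑' x, f x (u x) * w x| ≤ ε * nrmH adj Vp u * nrmH adj Vp w) := by
  obtain rfl : F = fun x t => ∫ s in (0 : ℝ)..t, f x s := funext₂ hF
  have hf₀ : UniformLittleO f :=
    uniformLittleO_of_forall_ne_zero (fun x => (hcont x).continuousAt) hsmall
  have hf : UniformLinearGrowth f := hf₀.uniformLinearGrowth hbdd
  have hgrad (u : H1 Vtx) := hf.hasGradientAt_tsum hcont
    (fun x => hasGradientAt_integral (hcont x) 0) (fun x => intervalIntegral.integral_same) u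
  refine ⟨fun u => (hgrad u).differentiableAt,
    fun u w => (hgrad u).fderiv_apply.trans (hf.inner_nemytskii u w), fun ε hε => ?_⟩
  simpa only [hf.inner_nemytskii] using
    exists_abs_inner_le_of_isLittleO (hf.isLittleO_nemytskii hf₀) (Real.sqrt_pos.2 hC1)
      (sqrt_mul_norm_le_nrmH hsym hfin hdeg hC1.le hVbd) hε

/-- Proposition 3.2 (i): `I(u) = Σ_x F(x,u(x))` is Fréchet differentiable with
`I'(u)w = Σ_x f(x,u(x))w(x)`, and `I'(u) = o(‖u‖)` as `u → 0` (operator norm with respect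
to the `V`-norm). -/
theorem stmt5
    {Vtx : Type*} (adj : Vtx → Vtx → Prop) (D : ℕ)
    (hsym : ∀ x y, adj x y → adj y x)
    (hirr : ∀ x, ¬ adj x x)
    (hfin : ∀ x, {y | adj x y}.Finite)
    (hdeg : ∀ x, {y | adj x y}.ncard ≤ D)
    (Vp : Vtx → ℝ) (C1 C2 : ℝ) (hC1 : 0 < C1)
    (hVbd : ∀ x, C1 ≤ Vp x ∧ Vp x ≤ C2)
    (f : Vtx → ℝ → ℝ) (hcont : ∀ x, Continuous (f x))
    (a q : ℝ) (ha : 0 < a) (hq : 2 < q)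
    (hgrowth : ∀ x t, |f x t| ≤ a * (|t| + |t| ^ (q - 1)))
    (hsmall : ∀ ε > 0, ∃ δ > 0, ∀ x t, t ≠ 0 → |t| < δ → |f x t| ≤ ε * |t|)
    (hmono : ∀ x, StrictMonoOn (fun t => f x t / |t|) (Set.Iio 0) ∧
             StrictMonoOn (fun t => f x t / |t|) (Set.Ioi 0))
    (F : Vtx → ℝ → ℝ) (hF : ∀ x t, F x t = ∫ s in (0:ℝ)..t, f x s)
    (hsuper : ∀ M : ℝ, ∃ R > 0, ∀ x t, R ≤ |t| → M ≤ F x t / t ^ 2)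
    :
    (∀ u : H1 Vtx, DifferentiableAt ℝ (fun v : H1 Vtx => ∑' x, F x (v x)) u) ∧
    (∀ u w : H1 Vtx,
      fderiv ℝ (fun v : H1 Vtx => ∑' x, F x (v x)) u w = ∑' x, f x (u x) * w x) ∧
    (∀ ε > 0, ∃ δ > 0, ∀ u w : H1 Vtx, nrmH adj Vp u < δ →
      |∑' x, f x (u x) * w x| ≤ ε * nrmH adj Vp u * nrmH adj Vp w) := by
  exact stmt5_general adj D hsym hfin hdeg Vp C1 C2 hC1 hVbd f hcont
    (exists_bound_of_growth ha.le (by linarith) hgrowth) hsmall F hF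
end
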